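/- Let a=(a_i)_{i∈V} with a_i≥0 for all i and a_x>0, and let χ:ℝ^V→(0,1] be measurable. Then for every ε>0, e^{−ε Σ_{i∈V} a_i} · E_{μ^{εa}}[χ(t+log ε) · O^π_xy · 1{R(T)={x}}] = ∫ κ(dt' ds') √(2π/z_{a,t'}) · exp(−(z_{a,t'}/2) ε² Var_{a,t',s'}(S')) · Π_{i∈V} e^{−½ a_i (e^{t'_i}+ε² e^{−t'_i})} · a_x χ(t'), and as ε↓0 this quantity increases monotonically to ∫ κ(dt' ds') √(2π/z_{a,t'}) · Π_{i∈V} e^{−½ a_i e^{t'_i}} · a_x χ(t'), which is strictly positive. -/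

import Mathlib

/-!
The pinning strength is removed by the substitution `t = t' − log ε`, `s_i = c + ε s'_i` with
`s'_x = 0` and `c = s_x`. Each Gibbs factor of an edge of `Γ` is invariant under it. A spanning
tree of `Γ_ρ` whose only root is `x` consists of the edge `x ∼ ρ` and `|V| − 1` edges of `Γ`, so
the powers of `ε` coming from the tree, from the reference measure and from the observable cancel
exactly (`integrand_scale`). The factor of a pinning edge turns into
`e^{ε a_i} e^{−½ a_i (e^{t'_i} + ε² e^{−t'_i})} e^{−½ a_i e^{t'_i} (c + ε s'_i)²}`. The integral
over `c` is Gaussian with total mass parameter `z_{a,t'}`; completing the square produces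
`√(2π/z)` and the variance (`wgt_eq_integral`). The substitution is carried out tree by tree in
`[0, ∞]` (`lintegral_change`), hence needs no integrability.

Since the variance is nonnegative, the weight `wgt` is pointwise antitone in `ε ≥ 0` and continuous
there, so everything else follows by dominated convergence once the integrand at `ε = 0` is shown
to be integrable. For that, `cosh u − 1 ≥ u²/2` and a Poincaré inequality on the connected graph
give Gaussian decay of the Gibbs factors in the differences `t_i − t_x` and in `s'`
(`gibbsG_le`). Integrating out `s'` costs only a factor exponential in `∑ |t_i − t_x|`, the powers
of `e^{t_x}` combine to `e^{t_x/2}`, and the pinning factor `e^{−½ a_x e^{t_x}}` makes the remaining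
integral over `t_x` converge (`integrable_dom_t`). Strict positivity uses a spanning tree rooted
only at `x`, which exists because `Γ` is connected.
-/

open MeasureTheory Real Filter
open scoped BigOperators

attribute [local instance] Classical.propDecidable

namespace H22

variable {V : Type*} [Fintype V] [DecidableEq V]

/-- The augmented graph `Γ_ρ`: add an extra vertex `ρ` (encoded by `none`)
joined to every vertex of the original graph. -/
def aug (G : SimpleGraph V) : SimpleGraph (Option V) :=
  SimpleGraph.fromRel (fun a b =>
    match a, b with
    | some i, some j => G.Adj i j
    | _, _ => True)

/-- `T` is (the edge set of) a spanning tree of `G`. -/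
def IsSpanningTree {α : Type*} (G : SimpleGraph α) (T : Finset (Sym2 α)) : Prop :=
  ↑T ⊆ G.edgeSet ∧ (SimpleGraph.fromEdgeSet (↑T : Set (Sym2 α))).IsTree

/-- The finset of all spanning trees of `G`. -/
noncomputable def STrees {α : Type*} [Fintype α] [DecidableEq α] (G : SimpleGraph α) :
    Finset (Finset (Sym2 α)) :=
  Finset.univ.filter (fun T => IsSpanningTree G T)

/-- Extension of a vector `t : V → ℝ` to `Option V` by `t_ρ := 0`. -/
def extV (t : V → ℝ) : Option V → ℝ := fun a => Option.elim a 0 t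

/-- Lift of a (symmetrized) function of two vertices to unordered pairs. -/
noncomputable def esym {α : Type*} (f : α → α → ℝ) : Sym2 α → ℝ :=
  Sym2.lift ⟨fun a b => (f a b + f b a) / 2, fun a b => by ring⟩

/-- Combined edge weights on the augmented graph: `β` on edges of `Γ`,
`ε_i` on the edge `i ∼ ρ`. -/
def bres (β : V → V → ℝ) (ε : V → ℝ) : Option V → Option V → ℝ := fun a b =>
  match a, b with
  | some i, some j => β i j
  | some i, none => ε i
  | none, some j => ε j
  | none, none => 0

/-- `B_{ij}(t,s) = cosh(t_i - t_j) + ½ (s_i - s_j)² e^{t_i+t_j}` on the augmented graph. -/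
noncomputable def Bfun (t s : V → ℝ) (a b : Option V) : ℝ :=
  Real.cosh (extV t a - extV t b) +
    (1 / 2) * (extV s a - extV s b) ^ 2 * Real.exp (extV t a + extV t b)

/-- Weight `β_{ij} e^{t_i+t_j}` of an edge of the augmented graph. -/
noncomputable def treeW (β : V → V → ℝ) (ε : V → ℝ) (t : V → ℝ) : Sym2 (Option V) → ℝ :=
  esym (fun a b => bres β ε a b * Real.exp (extV t a + extV t b))

/-- Gibbs factor `e^{-β_{ij}(B_{ij}(t,s)-1)}` of an edge of the augmented graph. -/
noncomputable def gibbs (β : V → V → ℝ) (ε : V → ℝ) (t s : V → ℝ) : Sym2 (Option V) → ℝ :=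
  esym (fun a b => Real.exp (-(bres β ε a b * (Bfun t s a b - 1))))

/-- The density of the measure `μ^ε` with respect to
(Lebesgue on `ℝ^V × ℝ^V`) × (counting measure on spanning trees). -/
noncomputable def dens (G : SimpleGraph V) (β : V → V → ℝ) (ε : V → ℝ)
    (t s : V → ℝ) (T : Finset (Sym2 (Option V))) : ℝ :=
  (∏ j, Real.exp (-t j) / (2 * Real.pi)) *
  (∏ e ∈ Finset.univ.filter (fun e : Sym2 (Option V) => e ∈ (aug G).edgeSet),
      gibbs β ε t s e) *
  (∏ e ∈ T, treeW β ε t e)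

/-- Expectation of an observable `f(t,s,T)` under the measure `μ^ε`. -/
noncomputable def expect (G : SimpleGraph V) (β : V → V → ℝ) (ε : V → ℝ)
    (f : (V → ℝ) → (V → ℝ) → Finset (Sym2 (Option V)) → ℝ) : ℝ :=
  ∑ T ∈ STrees (aug G), ∫ p : (V → ℝ) × (V → ℝ), dens G β ε p.1 p.2 T * f p.1 p.2 T

/-- The weighted graph Laplacian `A(t)` of `Γ`. -/
noncomputable def Amat (G : SimpleGraph V) (β : V → V → ℝ) (t : V → ℝ) : Matrix V V ℝ :=
  Matrix.of fun i j =>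
    if i = j then ∑ k ∈ Finset.univ.filter (fun k => G.Adj k j), β k j * Real.exp (t k + t j)
    else if G.Adj i j then -(β i j * Real.exp (t i + t j)) else 0

/-- The pinning diagonal matrix `ε̂(t) = diag(ε_i e^{t_i})`. -/
noncomputable def epsHat (ε : V → ℝ) (t : V → ℝ) : Matrix V V ℝ :=
  Matrix.diagonal fun i => ε i * Real.exp (t i)

/-- The Green's function `G^ε_{xy} = e^{t_x+t_y} (A(t)+ε̂(t))⁻¹_{xy}`. -/
noncomputable def Gfun (G : SimpleGraph V) (β : V → V → ℝ) (ε : V → ℝ)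
    (t : V → ℝ) (x y : V) : ℝ :=
  Real.exp (t x + t y) * (Amat G β t + epsHat ε t)⁻¹ x y

/-- The edge `i ∼ ρ` of the augmented graph. -/
def rootEdge (i : V) : Sym2 (Option V) := s(some i, none)

/-- The set of roots `R(T) = {i ∈ V : (i ∼ ρ) ∈ T}`. -/
noncomputable def roots (T : Finset (Sym2 (Option V))) : Finset V :=
  Finset.univ.filter fun i => rootEdge i ∈ T

/-- The forest `F(T) = T ∩ E`: edges of `T` not incident to `ρ`. -/
noncomputable def forestOf (T : Finset (Sym2 (Option V))) : Finset (Sym2 (Option V)) :=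
  T.filter fun e => ¬ ((none : Option V) ∈ e)

/-- `x ↔_T y`: `x` and `y` are connected in `T` through a path not using `ρ`. -/
def connIn (T : Finset (Sym2 (Option V))) (x y : V) : Prop :=
  (SimpleGraph.fromEdgeSet (↑(forestOf T) : Set (Sym2 (Option V)))).Reachable (some x) (some y)

/-- The observable `O^π_{xy}`. -/
noncomputable def obs (pv : V → ℝ) (x y : V) (t : V → ℝ)
    (T : Finset (Sym2 (Option V))) : ℝ :=
  Real.exp (t x + t y) / (pv x * Real.exp (t x) + pv y * Real.exp (t y)) *
    (if rootEdge x ∈ T ∧ connIn T x y then 1 else 0)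

/-- The pinning `ε = (π_i ε)_{i ∈ V}`. -/
def pinOf (pv : V → ℝ) (ε : ℝ) : V → ℝ := fun i => pv i * ε

/-- The pinning `c δ_x` concentrated at the single vertex `x`. -/
def singlePin (x : V) (c : ℝ) : V → ℝ := fun i => if i = x then c else 0

end H22

open scoped Topology

namespace H22

/-- `B_{ij}(t,s)` for two vertices of `Γ` (no `ρ` involved). -/
noncomputable def BfunV {V : Type*} (t s : V → ℝ) (i j : V) : ℝ :=
  Real.cosh (t i - t j) + (1 / 2) * (s i - s j) ^ 2 * Real.exp (t i + t j)

/-- Extension of `s' : ℝ^{V∖{x}}` to `ℝ^V` by `s'_x := 0`. -/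
noncomputable def sext {V : Type*} [DecidableEq V] (x : V)
    (s : {i : V // i ≠ x} → ℝ) : V → ℝ :=
  fun i => if h : i = x then 0 else s ⟨i, h⟩

/-- `z_{a,t'} = Σ_{i∈V} a_i e^{t'_i}`. -/
noncomputable def zfun {V : Type*} [Fintype V] (a : V → ℝ) (t : V → ℝ) : ℝ :=
  ∑ i, a i * Real.exp (t i)

/-- The variance `Var_{a,t',s'}(S')` of the auxiliary random variable `S'` taking value
`s'_i` with probability `a_i e^{t'_i}/z_{a,t'}`. -/
noncomputable def varS {V : Type*} [Fintype V] (a : V → ℝ) (t : V → ℝ) (s : V → ℝ) : ℝ :=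
  (∑ i, a i * Real.exp (t i) / zfun a t * (s i) ^ 2) -
    (∑ i, a i * Real.exp (t i) / zfun a t * s i) ^ 2

/-- The density of the measure `κ(dt' ds')` (on `ℝ^V × ℝ^{V∖{x}}`, with `s'_x := 0`)
with respect to Lebesgue measure. -/
noncomputable def kdens {V : Type*} [Fintype V] [DecidableEq V]
    (G : SimpleGraph V) (β : V → V → ℝ) (pv : V → ℝ) (x y : V)
    (t : V → ℝ) (s : V → ℝ) : ℝ :=
  (∏ j, Real.exp (-t j) / (2 * Real.pi)) *
  (∏ e ∈ Finset.univ.filter (fun e : Sym2 V => e ∈ G.edgeSet),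
      esym (fun i j => Real.exp (-(β i j * (BfunV t s i j - 1)))) e) *
  (∑ T ∈ STrees (aug G),
      if roots T = {x} ∧ connIn T x y then ∏ e ∈ forestOf T, treeW β 0 t e else 0) *
  Real.exp (t x) *
  (Real.exp (t x + t y) / (pv x * Real.exp (t x) + pv y * Real.exp (t y)))

set_option linter.unusedSectionVars false

section Lemmas

/-! ### One-dimensional integrals -/

lemma one_add_half_sq_le_cosh (u : ℝ) : u ^ 2 / 2 ≤ cosh u - 1 := by
  have h1 : cosh u = 1 + 2 * sinh (u / 2) ^ 2 := by
    have := Real.cosh_two_mul (u / 2)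
    rw [show 2 * (u / 2) = u by ring, Real.cosh_sq] at this
    linarith
  have h2 : (u / 2) ^ 2 ≤ sinh (u / 2) ^ 2 := by
    rcases le_total 0 (u / 2) with h | h
    · have := Real.self_le_sinh_iff.2 h
      nlinarith
    · have := Real.sinh_le_self_iff.2 h
      nlinarith
  rw [h1]; linarith

lemma integrable_exp_half_sub (a : ℝ) (ha : 0 < a) :
    Integrable (fun c : ℝ => exp (c / 2 - (1 / 2) * a * exp c)) := by
  set L := log (2 / a) with hL
  have hK : ∀ c : ℝ, c - (1 / 2) * a * exp c ≤ L - 1 := by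
    intro c
    -- tangent line of the exponential at `L`
    have h1 : c - L + 1 ≤ exp (c - L) := Real.add_one_le_exp (c - L)
    have h2 : exp c = exp (c - L) * (2 / a) := by
      rw [← Real.exp_log (show 0 < 2 / a by positivity), ← hL, ← Real.exp_add]; congr 1; ring
    have h3 : (1 / 2) * a * exp c = exp (c - L) := by rw [h2]; field_simp
    linarith
  refine Integrable.mono' ((integrable_inv_one_add_sq).const_mul (8 * (1 + exp (L - 1))))
    (by fun_prop) (ae_of_all _ fun c => ?_)
  rw [Real.norm_of_nonneg (exp_pos _).le]
  have h1 : exp (c / 2 - (1 / 2) * a * exp c) ≤ (1 + exp (L - 1)) * exp (-(|c| / 2)) := by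
    have hp : 0 < exp (-(|c| / 2)) := exp_pos _
    have hp' : 0 < exp (L - 1) := exp_pos _
    rcases le_total 0 c with h | h
    · have : exp (c / 2 - (1 / 2) * a * exp c) ≤ exp (L - 1) * exp (-(|c| / 2)) := by
        rw [← Real.exp_add, abs_of_nonneg h]
        exact Real.exp_le_exp.2 (by linarith [hK c])
      nlinarith
    · have : exp (c / 2 - (1 / 2) * a * exp c) ≤ exp (-(|c| / 2)) := by
        rw [abs_of_nonpos h]
        have : 0 ≤ (1 / 2) * a * exp c := by positivity
        exact Real.exp_le_exp.2 (by linarith)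
      nlinarith
  have h2 : exp (-(|c| / 2)) ≤ 8 * (1 + c ^ 2)⁻¹ := by
    have h3 := Real.quadratic_le_exp_of_nonneg (show 0 ≤ |c| / 2 by positivity)
    rw [Real.exp_neg, ← div_eq_mul_inv, inv_le_comm₀ (exp_pos _) (by positivity), inv_div]
    have : |c| ^ 2 = c ^ 2 := sq_abs c
    have h4 : 0 ≤ |c| := abs_nonneg c
    have h5 : 0 ≤ c ^ 2 := sq_nonneg c
    rw [div_le_iff₀ (by norm_num)]
    nlinarith
  calc _ ≤ _ := h1
    _ ≤ (1 + exp (L - 1)) * (8 * (1 + c ^ 2)⁻¹) := by gcongr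
    _ = _ := by ring

/-- Completing the square in the global shift `c` leaves the variance of the weighted sample
`(v_i)` in the exponent. -/
lemma gauss_shift {V : Type*} [Fintype V] (b v : V → ℝ) (hz : 0 < ∑ i, b i) :
    Integrable (fun c : ℝ => exp (-(1 / 2) * ∑ i, b i * (c + v i) ^ 2)) ∧
    ∫ c : ℝ, exp (-(1 / 2) * ∑ i, b i * (c + v i) ^ 2) =
      sqrt (2 * π / ∑ i, b i) *
        exp (-((∑ i, b i) / 2) * ((∑ i, b i / (∑ j, b j) * v i ^ 2)
          - (∑ i, b i / (∑ j, b j) * v i) ^ 2)) := by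
  set z := ∑ i, b i with hzd
  set m1 := ∑ i, b i * v i with h1
  set m2 := ∑ i, b i * v i ^ 2 with h2
  have e1 : ∑ i, b i / z * v i ^ 2 = m2 / z := by
    rw [h2, Finset.sum_div]; exact Finset.sum_congr rfl fun i _ => by ring
  have e2 : ∑ i, b i / z * v i = m1 / z := by
    rw [h1, Finset.sum_div]; exact Finset.sum_congr rfl fun i _ => by ring
  rw [e1, e2]
  have e3 : ∀ c, -(1 / 2) * ∑ i, b i * (c + v i) ^ 2 =
      -(z / 2) * (c + m1 / z) ^ 2 + -(z / 2) * (m2 / z - (m1 / z) ^ 2) := by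
    intro c
    have : ∑ i, b i * (c + v i) ^ 2 = z * c ^ 2 + 2 * c * m1 + m2 := by
      rw [hzd, h1, h2, Finset.sum_mul, Finset.mul_sum, ← Finset.sum_add_distrib,
        ← Finset.sum_add_distrib]
      exact Finset.sum_congr rfl fun i _ => by ring
    rw [this]; field_simp; ring
  simp_rw [e3, Real.exp_add]
  constructor
  · exact ((integrable_exp_neg_mul_sq (show 0 < z / 2 by positivity)).comp_add_right
      (m1 / z)).mul_const _
  · rw [integral_mul_const, integral_add_right_eq_self (fun c => exp (-(z / 2) * c ^ 2)),
      integral_gaussian]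
    congr 2
    field_simp

lemma integrable_gauss_pi {ι : Type*} [Fintype ι] {A : ℝ} (hA : 0 < A) :
    Integrable (fun w : ι → ℝ => exp (-A * ∑ i, w i ^ 2)) := by
  have := Integrable.fintype_prod (ι := ι) (μ := fun _ => (volume : Measure ℝ))
    (f := fun _ (u : ℝ) => exp (-A * u ^ 2)) (fun _ => integrable_exp_neg_mul_sq hA)
  simp only [← Real.exp_sum, ← Finset.mul_sum] at this
  exact this

lemma integral_gauss_pi {ι : Type*} [Fintype ι] (A : ℝ) :
    ∫ w : ι → ℝ, exp (-A * ∑ i, w i ^ 2) = sqrt (π / A) ^ Fintype.card ι := by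
  have := integral_fintype_prod_volume_eq_pow (ι := ι) (fun u : ℝ => exp (-A * u ^ 2))
  simpa only [← Real.exp_sum, ← Finset.mul_sum, integral_gaussian] using this

/-! ### Splitting off the value at `x` -/

lemma measurable_sext {V : Type*} [DecidableEq V] (x : V) : Measurable (sext x) := by
  refine measurable_pi_lambda _ fun i => ?_
  unfold sext
  by_cases h : i = x
  · simp [h]
  · simp only [h, dite_false]; fun_prop

lemma continuous_sext {V : Type*} [DecidableEq V] (x : V) : Continuous (sext x) := by
  refine continuous_pi fun i => ?_
  unfold sext
  by_cases h : i = x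
  · simp only [h, dite_true]; fun_prop
  · simp only [h, dite_false]; fun_prop


variable {V : Type*} [Fintype V] [DecidableEq V]

/-- `(c, w) ↦ c + w`, where `w` is extended by `0` at `x`, is a unimodular parametrization of
`ℝ^V`. -/
lemma mp_shift (x : V) :
    MeasurePreserving (fun p : ℝ × ({i : V // i ≠ x} → ℝ) => fun i => p.1 + sext x p.2 i)
      volume volume := by
  have h1 : MeasurePreserving
      (MeasurableEquiv.piEquivPiSubtypeProd (fun _ : V => ℝ) (fun i => i = x)).symm
      ((volume : Measure ({i : V // i = x} → ℝ)).prod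
        (volume : Measure ({i : V // i ≠ x} → ℝ))) volume :=
    by
      have h := (volume_preserving_piEquivPiSubtypeProd (fun _ : V => ℝ) (fun i => i = x)).symm
      rw [Measure.volume_eq_prod] at h
      convert h
      rfl
  have h2 : MeasurePreserving (MeasurableEquiv.funUnique {i : V // i = x} ℝ).symm
      (volume : Measure ℝ) volume := by
    convert (volume_preserving_funUnique {i : V // i = x} ℝ).symm
  have h3 : MeasurePreserving (fun p : ℝ × ({i : V // i ≠ x} → ℝ) =>
      (p.1, (fun _ => p.1) + p.2)) (volume.prod volume) (volume.prod volume) := by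
    refine (MeasurePreserving.id volume).skew_product
      (g := fun (c : ℝ) (w : {i : V // i ≠ x} → ℝ) => (fun _ => c) + w) ?_ ?_
    · unfold Function.uncurry
      fun_prop
    · exact ae_of_all _ fun c => (measurePreserving_add_left volume _).map_eq
  have h4 := h1.comp ((h2.prod (MeasurePreserving.id (volume : Measure ({i : V // i ≠ x} → ℝ)))).comp h3)
  have key : (fun (p : ℝ × ({i : V // i ≠ x} → ℝ)) i => p.1 + sext x p.2 i) =
      (MeasurableEquiv.piEquivPiSubtypeProd (fun _ : V => ℝ) (fun i => i = x)).symm ∘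
      Prod.map (MeasurableEquiv.funUnique {i : V // i = x} ℝ).symm id ∘
        fun p => (p.1, (fun _ => p.1) + p.2) := by
    funext p i
    by_cases h : i = x <;>
      simp [h, sext, MeasurableEquiv.piEquivPiSubtypeProd, Equiv.piEquivPiSubtypeProd]
  rw [key]
  exact h4

lemma sum_sext_sq (x : V) (w : {i : V // i ≠ x} → ℝ) :
    ∑ i, sext x w i ^ 2 = ∑ i, w i ^ 2 := by
  rw [Fintype.sum_eq_add_sum_subtype_ne _ x]
  have : sext x w x = 0 := by simp [sext]
  rw [this]
  simp only [ne_eq, OfNat.ofNat_ne_zero, not_false_eq_true, zero_pow, zero_add]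
  exact Finset.sum_congr rfl fun i _ => by simp [sext, i.2]

/-- Tonelli in the coordinates `s = c + ε w`. -/
lemma lintegral_shift_scale (x : V) {ε : ℝ} (hε : 0 < ε) (f : (V → ℝ) → ENNReal)
    (hf : Measurable f) :
    ∫⁻ s, f s = ENNReal.ofReal (ε ^ Fintype.card {i : V // i ≠ x}) *
      ∫⁻ w : {i : V // i ≠ x} → ℝ, ∫⁻ c : ℝ, f (fun i => c + ε * sext x w i) := by
  rw [← (mp_shift x).lintegral_comp hf]
  have hg : Measurable (fun p : ℝ × ({i : V // i ≠ x} → ℝ) => f (fun i => p.1 + sext x p.2 i)) :=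
    hf.comp (mp_shift x).measurable
  rw [show (volume : Measure (ℝ × ({i : V // i ≠ x} → ℝ))) = volume.prod volume from rfl,
    lintegral_prod_symm _ hg.aemeasurable]
  set h : ({i : V // i ≠ x} → ℝ) → ENNReal := fun w => ∫⁻ c : ℝ, f (fun i => c + sext x w i) with hh
  have hm : Measurable h := hg.lintegral_prod_left'
  have hs := Measure.map_addHaar_smul (volume : Measure ({i : V // i ≠ x} → ℝ)) hε.ne'
  have h1 : ∫⁻ w, h (ε • w) = ENNReal.ofReal ((ε ^ Fintype.card {i : V // i ≠ x})⁻¹) * ∫⁻ w, h w := by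
    rw [← lintegral_map hm (measurable_const_smul ε), hs, lintegral_smul_measure,
      Module.finrank_fintype_fun_eq_card, abs_of_pos (by positivity), smul_eq_mul]
  have h2 : ∀ w, h (ε • w) = ∫⁻ c : ℝ, f (fun i => c + ε * sext x w i) := by
    intro w
    simp only [hh]
    congr! 4 with c i
    by_cases hi : i = x <;> simp [sext, hi]
  simp_rw [← h2, h1, ← mul_assoc]
  rw [← ENNReal.ofReal_mul (by positivity), mul_inv_cancel₀ (by positivity)]
  simp [hh]


/-! ### The Dirichlet form and its Poincaré inequality -/

/-- The unweighted Dirichlet form `Σ_{i∼j} (f_i − f_j)²`, summed over unordered edges. -/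
noncomputable def dirichlet (G : SimpleGraph V) (f : V → ℝ) : ℝ :=
  ∑ e ∈ Finset.univ.filter (fun e : Sym2 V => e ∈ G.edgeSet),
    esym (fun i j => (f i - f j) ^ 2) e

lemma sq_le_dirichlet (G : SimpleGraph V) (f : V → ℝ) {i j : V} (h : G.Adj i j) :
    (f i - f j) ^ 2 ≤ dirichlet G f := by
  have h1 : (f i - f j) ^ 2 = esym (fun i j => (f i - f j) ^ 2) s(i, j) := by
    simp only [esym, Sym2.lift_mk]; ring
  rw [h1]
  refine Finset.single_le_sum (f := esym (fun i j => (f i - f j) ^ 2)) (fun e _ => ?_) (by simpa using h)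
  induction e using Sym2.ind with
  | _ i j => simp only [esym, Sym2.lift_mk]; positivity

lemma dirichlet_nonneg (G : SimpleGraph V) (f : V → ℝ) : 0 ≤ dirichlet G f := by
  refine Finset.sum_nonneg fun e _ => ?_
  induction e using Sym2.ind with
  | _ i j => simp only [esym, Sym2.lift_mk]; positivity

lemma walk_poincare (G : SimpleGraph V) {i j : V} (p : G.Walk i j) :
    ∃ C : ℝ, 0 ≤ C ∧ ∀ f : V → ℝ, (f i - f j) ^ 2 ≤ C * dirichlet G f := by
  induction p with
  | nil => exact ⟨0, le_rfl, fun f => by simp⟩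
  | @cons u v w h p ih =>
    obtain ⟨C, hC, hf⟩ := ih
    refine ⟨2 + 2 * C, by positivity, fun f => ?_⟩
    have h1 := sq_le_dirichlet G f h
    have h2 := hf f
    nlinarith [sq_nonneg ((f u - f v) - (f v - f w))]

lemma poincare (G : SimpleGraph V) (hG : G.Connected) (x : V) :
    ∃ κ : ℝ, 0 < κ ∧ ∀ f : V → ℝ, κ * ∑ i, (f i - f x) ^ 2 ≤ dirichlet G f := by
  have h : ∀ i, ∃ C : ℝ, 0 ≤ C ∧ ∀ f : V → ℝ, (f i - f x) ^ 2 ≤ C * dirichlet G f := fun i =>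
    walk_poincare G (hG.preconnected i x).some
  choose C hC hf using h
  have hS : 0 ≤ ∑ i, C i := Finset.sum_nonneg fun i _ => hC i
  refine ⟨1 / (1 + ∑ i, C i), by positivity, fun f => ?_⟩
  have h1 : ∑ i, (f i - f x) ^ 2 ≤ (∑ i, C i) * dirichlet G f := by
    rw [Finset.sum_mul]; exact Finset.sum_le_sum fun i _ => hf i f
  have h2 := dirichlet_nonneg G f
  rw [one_div, inv_mul_le_iff₀ (by positivity)]
  nlinarith

/-! ### Edges and spanning trees of the augmented graph -/

lemma aug_adj_some (G : SimpleGraph V) (i j : V) : (aug G).Adj (some i) (some j) ↔ G.Adj i j := by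
  simp only [aug, SimpleGraph.fromRel_adj, ne_eq, Option.some.injEq]
  exact ⟨fun h => h.2.elim id fun h => h.symm, fun h => ⟨h.ne, Or.inl h⟩⟩

lemma aug_adj_none (G : SimpleGraph V) (i : V) : (aug G).Adj (some i) none := by
  simp [aug, SimpleGraph.fromRel_adj]

lemma edge_cases (G : SimpleGraph V) (e : Sym2 (Option V)) (he : e ∈ (aug G).edgeSet) :
    (∃ i j, G.Adj i j ∧ e = s(some i, some j)) ∨ ∃ i, e = rootEdge i := by
  induction e using Sym2.ind with
  | _ a b =>
    rw [SimpleGraph.mem_edgeSet] at he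
    cases a with
    | none =>
      cases b with
      | none => exact absurd he (SimpleGraph.irrefl _)
      | some j => exact Or.inr ⟨j, Sym2.eq_swap⟩
    | some i =>
      cases b with
      | none => exact Or.inr ⟨i, rfl⟩
      | some j => exact Or.inl ⟨i, j, (aug_adj_some G i j).1 he, rfl⟩

lemma rootEdge_inj : Function.Injective (rootEdge : V → Sym2 (Option V)) := by
  intro i j h
  simpa [rootEdge] using h

lemma prod_aug_edges (G : SimpleGraph V) (g : Sym2 (Option V) → ℝ) :
    ∏ e ∈ Finset.univ.filter (fun e : Sym2 (Option V) => e ∈ (aug G).edgeSet), g e =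
      (∏ e ∈ Finset.univ.filter (fun e : Sym2 V => e ∈ G.edgeSet), g (e.map some)) *
        ∏ i, g (rootEdge i) := by
  have h : Finset.univ.filter (fun e : Sym2 (Option V) => e ∈ (aug G).edgeSet) =
      ((Finset.univ.filter (fun e : Sym2 V => e ∈ G.edgeSet)).image (Sym2.map some)) ∪
        Finset.univ.image rootEdge := by
    ext e
    simp only [Finset.mem_filter, Finset.mem_univ, true_and, Finset.mem_union, Finset.mem_image]
    constructor
    · intro he
      rcases edge_cases G e he with ⟨i, j, hij, rfl⟩ | ⟨i, rfl⟩
      · exact Or.inl ⟨s(i, j), hij, rfl⟩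
      · exact Or.inr ⟨i, rfl⟩
    · rintro (⟨e, he, rfl⟩ | ⟨i, rfl⟩)
      · induction e using Sym2.ind with
        | _ i j => exact (aug_adj_some G i j).2 he
      · exact aug_adj_none G i
  rw [h, Finset.prod_union, Finset.prod_image, Finset.prod_image]
  · exact fun i _ j _ h => rootEdge_inj h
  · exact fun i _ j _ h => Sym2.map.injective (Option.some_injective V) h
  · rw [Finset.disjoint_left]
    intro e he he'
    simp only [Finset.mem_image, Finset.mem_univ, true_and] at he he'
    obtain ⟨e, -, rfl⟩ := he
    obtain ⟨i, hi⟩ := he'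
    have : (none : Option V) ∈ Sym2.map some e := by rw [← hi]; simp [rootEdge]
    simp [Sym2.mem_map] at this

lemma forest_edge (G : SimpleGraph V) {T : Finset (Sym2 (Option V))} (hT : T ∈ STrees (aug G))
    {e : Sym2 (Option V)} (he : e ∈ forestOf T) :
    ∃ i j, G.Adj i j ∧ e = s(some i, some j) := by
  simp only [STrees, Finset.mem_filter, Finset.mem_univ, true_and] at hT
  simp only [forestOf, Finset.mem_filter] at he
  rcases edge_cases G e (hT.1 he.1) with h | ⟨i, rfl⟩
  · exact h
  · exact absurd (by simp [rootEdge]) he.2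

lemma tree_eq_insert (G : SimpleGraph V) {T : Finset (Sym2 (Option V))}
    (hT : T ∈ STrees (aug G)) {x : V} (hx : roots T = {x}) :
    T = insert (rootEdge x) (forestOf T) := by
  have hr : ∀ i, rootEdge i ∈ T ↔ i = x := fun i => by
    have : i ∈ roots T ↔ i ∈ ({x} : Finset V) := by rw [hx]
    simpa [roots] using this
  have hT' := hT
  simp only [STrees, Finset.mem_filter, Finset.mem_univ, true_and] at hT'
  ext e
  simp only [Finset.mem_insert, forestOf, Finset.mem_filter]
  constructor
  · intro he
    rcases edge_cases G e (hT'.1 he) with ⟨i, j, -, rfl⟩ | ⟨i, rfl⟩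
    · exact Or.inr ⟨he, by simp⟩
    · exact Or.inl (by rw [(hr i).1 he])
  · rintro (rfl | h)
    · exact (hr x).2 rfl
    · exact h.1

lemma rootEdge_not_mem_forest (T : Finset (Sym2 (Option V))) (x : V) :
    rootEdge x ∉ forestOf T := by
  simp [forestOf, rootEdge]

lemma prod_tree (G : SimpleGraph V) {T : Finset (Sym2 (Option V))}
    (hT : T ∈ STrees (aug G)) {x : V} (hx : roots T = {x}) (g : Sym2 (Option V) → ℝ) :
    ∏ e ∈ T, g e = g (rootEdge x) * ∏ e ∈ forestOf T, g e := by
  conv_lhs => rw [tree_eq_insert G hT hx]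
  rw [Finset.prod_insert (rootEdge_not_mem_forest T x)]

/-- A spanning tree of `Γ_ρ` has `|V|` edges, exactly one of which meets `ρ`. -/
lemma card_forest (G : SimpleGraph V) {T : Finset (Sym2 (Option V))}
    (hT : T ∈ STrees (aug G)) {x : V} (hx : roots T = {x}) :
    (forestOf T).card = Fintype.card {i : V // i ≠ x} := by
  have h1 := tree_eq_insert G hT hx
  simp only [STrees, Finset.mem_filter, Finset.mem_univ, true_and] at hT
  have h2 : T.card = (forestOf T).card + 1 := by
    conv_lhs => rw [h1]
    rw [Finset.card_insert_of_notMem (rootEdge_not_mem_forest T x)]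
  have h3 := (SimpleGraph.isTree_iff_connected_and_card.1 hT.2).2
  have h4 : (SimpleGraph.fromEdgeSet (↑T : Set (Sym2 (Option V)))).edgeSet = ↑T := by
    rw [SimpleGraph.edgeSet_fromEdgeSet, sdiff_eq_left, Set.disjoint_left]
    intro e he hd
    exact (aug G).not_isDiag_of_mem_edgeSet (hT.1 he) hd
  rw [h4] at h3
  simp only [Nat.card_eq_fintype_card, Fintype.card_option, Fintype.card_coe, SetLike.coe_sort_coe] at h3
  rw [Fintype.card_subtype_compl, Fintype.card_subtype_eq]
  omega

/-- A spanning tree of the connected graph `Γ`, attached to `ρ` through the edge `x ∼ ρ`. -/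
lemma exists_tree (G : SimpleGraph V) (hG : G.Connected) (x y : V) :
    ∃ T ∈ STrees (aug G), roots T = {x} ∧ connIn T x y := by
  obtain ⟨T₀, hle, hT₀⟩ := hG.exists_isTree_le
  set F : Finset (Sym2 (Option V)) := T₀.edgeFinset.image (Sym2.map some) with hF
  have hnone : ∀ e ∈ F, (none : Option V) ∉ e := by
    intro e he
    obtain ⟨e, -, rfl⟩ := Finset.mem_image.1 he
    simp [Sym2.mem_map]
  have hroot : ∀ i, rootEdge i ∉ F := fun i h => hnone _ h (by simp [rootEdge])
  have hmem : ∀ {i j}, T₀.Adj i j → s(some i, some j) ∈ F := fun {i j} h =>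
    Finset.mem_image.2 ⟨s(i, j), by simpa using h, rfl⟩
  set T := insert (rootEdge x) F with hT
  have hforest : forestOf T = F := by
    ext e
    simp only [forestOf, hT, Finset.mem_filter, Finset.mem_insert]
    constructor
    · rintro ⟨rfl | h, h'⟩
      · exact absurd (by simp [rootEdge]) h'
      · exact h
    · exact fun h => ⟨Or.inr h, hnone e h⟩
  have hsub : (↑T : Set (Sym2 (Option V))) ⊆ (aug G).edgeSet := by
    intro e he
    rcases Finset.mem_insert.1 (Finset.mem_coe.1 he) with rfl | he
    · exact aug_adj_none G x
    · obtain ⟨e, he₀, rfl⟩ := Finset.mem_image.1 he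
      induction e using Sym2.ind with
      | _ i j =>
        have he' : T₀.Adj i j := (SimpleGraph.mem_edgeSet _).1 (SimpleGraph.mem_edgeFinset.1 he₀)
        exact (aug_adj_some G i j).2 (hle he')
  have hreach : ∀ (S : Finset (Sym2 (Option V))), F ⊆ S → ∀ i j,
      (SimpleGraph.fromEdgeSet (↑S : Set (Sym2 (Option V)))).Reachable (some i) (some j) := by
    intro S hS i j
    let φ : T₀ →g SimpleGraph.fromEdgeSet (↑S : Set (Sym2 (Option V))) :=
      ⟨some, fun {i j} h => by
        rw [SimpleGraph.fromEdgeSet_adj]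
        exact ⟨hS (hmem h), by simpa using h.ne⟩⟩
    exact (hT₀.connected.preconnected i j).map φ
  have hedge : (SimpleGraph.fromEdgeSet (↑T : Set (Sym2 (Option V)))).edgeSet = ↑T := by
    rw [SimpleGraph.edgeSet_fromEdgeSet, sdiff_eq_left, Set.disjoint_left]
    intro e he hd
    exact (aug G).not_isDiag_of_mem_edgeSet (hsub he) hd
  refine ⟨T, ?_, ?_, ?_⟩
  · simp only [STrees, Finset.mem_filter, Finset.mem_univ, true_and]
    refine ⟨hsub, SimpleGraph.isTree_iff_connected_and_card.2 ⟨?_, ?_⟩⟩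
    · have hx : ∀ a, (SimpleGraph.fromEdgeSet (↑T : Set (Sym2 (Option V)))).Reachable a (some x) := by
        intro a
        cases a with
        | none =>
          refine SimpleGraph.Adj.reachable ?_
          rw [SimpleGraph.fromEdgeSet_adj]
          refine ⟨?_, by simp⟩
          rw [Sym2.eq_swap]
          exact Finset.mem_coe.2 (Finset.mem_insert_self _ _)
        | some i => exact hreach T (Finset.subset_insert _ _) i x
      exact { preconnected := fun a b => (hx a).trans (hx b).symm }
    · have h1 := hT₀.card_edgeFinset
      have h2 : F.card = T₀.edgeFinset.card :=
        Finset.card_image_of_injective _ (Sym2.map.injective (Option.some_injective V))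
      have h3 : T.card = F.card + 1 := Finset.card_insert_of_notMem (hroot x)
      rw [hedge]
      simp only [Nat.card_eq_fintype_card, Fintype.card_option, Fintype.card_coe,
        SetLike.coe_sort_coe]
      omega
  · ext i
    simp only [roots, Finset.mem_filter, Finset.mem_univ, true_and, Finset.mem_singleton, hT,
      Finset.mem_insert, hroot i, or_false]
    exact ⟨fun h => rootEdge_inj h, fun h => by rw [h]⟩
  · unfold connIn
    rw [hforest]
    exact hreach F (Finset.Subset.refl _) x y


/-! ### The limiting density, tree by tree -/

/-- Product of the Gibbs factors over the edges of `Γ`. -/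
noncomputable def gibbsG (G : SimpleGraph V) (β : V → V → ℝ) (t s : V → ℝ) : ℝ :=
  ∏ e ∈ Finset.univ.filter (fun e : Sym2 V => e ∈ G.edgeSet),
    esym (fun i j => Real.exp (-(β i j * (BfunV t s i j - 1)))) e

/-- The contribution of a single tree `T` to the density of `κ`. -/
noncomputable def kdensT (G : SimpleGraph V) (β : V → V → ℝ) (pv : V → ℝ) (x y : V)
    (T : Finset (Sym2 (Option V))) (t s : V → ℝ) : ℝ :=
  (∏ j, Real.exp (-t j) / (2 * Real.pi)) * gibbsG G β t s *
  (if roots T = {x} ∧ connIn T x y then ∏ e ∈ forestOf T, treeW β 0 t e else 0) *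
  Real.exp (t x) *
  (Real.exp (t x + t y) / (pv x * Real.exp (t x) + pv y * Real.exp (t y)))

/-- The integrand multiplying `κ` at pinning strength `ε`; at `ε = 0` it is the limiting one. -/
noncomputable def wgt (a : V → ℝ) (χ : (V → ℝ) → ℝ) (x : V) (ε : ℝ) (t s : V → ℝ) : ℝ :=
  Real.sqrt (2 * Real.pi / zfun a t) *
    Real.exp (-(zfun a t / 2) * ε ^ 2 * varS a t s) *
    (∏ i, Real.exp (-(1 / 2) * a i * (Real.exp (t i) + ε ^ 2 * Real.exp (-(t i))))) *
    (a x * χ t)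

lemma kdens_eq_sum (G : SimpleGraph V) (β : V → V → ℝ) (pv : V → ℝ) (x y : V) (t s : V → ℝ) :
    kdens G β pv x y t s = ∑ T ∈ STrees (aug G), kdensT G β pv x y T t s := by
  simp only [kdens, kdensT, gibbsG, Finset.mul_sum, Finset.sum_mul]

lemma treeW_some (β : V → V → ℝ) (hβ : ∀ i j, β i j = β j i) (ε t : V → ℝ) (i j : V) :
    treeW β ε t s(some i, some j) = β i j * exp (t i + t j) := by
  simp only [treeW, esym, Sym2.lift_mk, bres, extV, Option.elim]
  rw [hβ j i, add_comm (t j)]; ring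

lemma treeW_root (β : V → V → ℝ) (ε t : V → ℝ) (i : V) :
    treeW β ε t (rootEdge i) = ε i * exp (t i) := by
  simp only [treeW, rootEdge, esym, Sym2.lift_mk, bres, extV, Option.elim, add_zero, zero_add]
  ring

lemma gibbs_some (β : V → V → ℝ) (ε t s : V → ℝ) (e : Sym2 V) :
    gibbs β ε t s (e.map some) =
      esym (fun i j => Real.exp (-(β i j * (BfunV t s i j - 1)))) e := by
  induction e using Sym2.ind with
  | _ i j => rfl

lemma gibbs_root (β : V → V → ℝ) (ε t s : V → ℝ) (i : V) :
    gibbs β ε t s (rootEdge i) =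
      exp (-(ε i * (cosh (t i) + 1 / 2 * s i ^ 2 * exp (t i) - 1))) := by
  simp only [gibbs, rootEdge, esym, Sym2.lift_mk, bres, Bfun, extV, Option.elim, add_zero, zero_add,
    sub_zero, zero_sub, cosh_neg, neg_sq]
  ring

lemma dens_eq (G : SimpleGraph V) (β : V → V → ℝ) (ε t s : V → ℝ)
    {T : Finset (Sym2 (Option V))} (hT : T ∈ STrees (aug G)) {x : V} (hx : roots T = {x}) :
    dens G β ε t s T = (∏ j, Real.exp (-t j) / (2 * Real.pi)) * (gibbsG G β t s *
      ∏ i, exp (-(ε i * (cosh (t i) + 1 / 2 * s i ^ 2 * exp (t i) - 1)))) *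
      (ε x * exp (t x) * ∏ e ∈ forestOf T, treeW β ε t e) := by
  unfold dens
  rw [prod_aug_edges, prod_tree G hT hx, treeW_root]
  simp only [gibbs_some, gibbs_root, gibbsG]

lemma kdensT_pos (G : SimpleGraph V) (β : V → V → ℝ) (hβ : ∀ i j, β i j = β j i)
    (hβpos : ∀ i j, G.Adj i j → 0 < β i j) (pv : V → ℝ) (x y : V)
    (hpx : 0 < pv x) (hpy : 0 < pv y)
    {T : Finset (Sym2 (Option V))} (hT : T ∈ STrees (aug G)) (t s : V → ℝ) :
    0 ≤ kdensT G β pv x y T t s ∧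
      (roots T = {x} ∧ connIn T x y → 0 < kdensT G β pv x y T t s) := by
  have h1 : 0 < gibbsG G β t s := Finset.prod_pos fun e _ => by
    induction e using Sym2.ind with
    | _ i j => simp only [esym, Sym2.lift_mk]; positivity
  have h2 : 0 < ∏ e ∈ forestOf T, treeW β 0 t e := Finset.prod_pos fun e he => by
    obtain ⟨i, j, hij, rfl⟩ := forest_edge G hT he
    rw [treeW_some β hβ]
    have := hβpos i j hij
    positivity
  have hpos : roots T = {x} ∧ connIn T x y → 0 < kdensT G β pv x y T t s := fun h => by
    unfold kdensT
    rw [if_pos h]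
    positivity
  refine ⟨?_, hpos⟩
  by_cases h : roots T = {x} ∧ connIn T x y
  · exact (hpos h).le
  · unfold kdensT; rw [if_neg h]; simp

lemma zfun_pos (a : V → ℝ) (ha : ∀ i, 0 ≤ a i) (x : V) (hax : 0 < a x) (t : V → ℝ) :
    a x * exp (t x) ≤ zfun a t ∧ 0 < zfun a t := by
  have h : a x * exp (t x) ≤ zfun a t :=
    Finset.single_le_sum (f := fun i => a i * exp (t i))
      (fun i _ => mul_nonneg (ha i) (exp_pos _).le) (Finset.mem_univ x)
  exact ⟨h, lt_of_lt_of_le (by positivity) h⟩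

lemma varS_nonneg (a : V → ℝ) (ha : ∀ i, 0 ≤ a i) (t s : V → ℝ) (hz : 0 < zfun a t) :
    0 ≤ varS a t s := by
  have h1 : ∀ i ∈ Finset.univ, 0 ≤ a i * exp (t i) / zfun a t := fun i _ =>
    div_nonneg (mul_nonneg (ha i) (exp_pos _).le) hz.le
  have h2 : ∑ i, a i * exp (t i) / zfun a t = 1 := by
    rw [← Finset.sum_div]; exact div_self hz.ne'
  exact sub_nonneg.2
    (Real.pow_arith_mean_le_arith_mean_pow_of_even Finset.univ _ s h1 h2 even_two)

lemma wgt_pos (a : V → ℝ) (ha : ∀ i, 0 ≤ a i) (x : V) (hax : 0 < a x)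
    (χ : (V → ℝ) → ℝ) (hχ : ∀ t, χ t ∈ Set.Ioc (0 : ℝ) 1) (ε : ℝ) (t s : V → ℝ) :
    0 < wgt a χ x ε t s := by
  have h1 := (zfun_pos a ha x hax t).2
  have h2 := (hχ t).1
  unfold wgt
  have : 0 < ∏ i, Real.exp (-(1 / 2) * a i * (Real.exp (t i) + ε ^ 2 * Real.exp (-(t i)))) :=
    Finset.prod_pos fun i _ => exp_pos _
  positivity

lemma wgt_anti (a : V → ℝ) (ha : ∀ i, 0 ≤ a i) (x : V) (hax : 0 < a x)
    (χ : (V → ℝ) → ℝ) (hχ : ∀ t, χ t ∈ Set.Ioc (0 : ℝ) 1) {ε₁ ε₂ : ℝ} (h0 : 0 ≤ ε₁)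
    (h : ε₁ ≤ ε₂) (t s : V → ℝ) :
    wgt a χ x ε₂ t s ≤ wgt a χ x ε₁ t s := by
  have h1 := (zfun_pos a ha x hax t).2
  have h2 := (hχ t).1
  have h3 := varS_nonneg a ha t s h1
  have h4 : ε₁ ^ 2 ≤ ε₂ ^ 2 := by gcongr
  unfold wgt
  refine mul_le_mul_of_nonneg_right (mul_le_mul (mul_le_mul_of_nonneg_left ?_ (sqrt_nonneg _)) ?_
    (Finset.prod_nonneg fun i _ => (exp_pos _).le) (by positivity)) (by positivity)
  · have : zfun a t / 2 * varS a t s * ε₁ ^ 2 ≤ zfun a t / 2 * varS a t s * ε₂ ^ 2 := by gcongr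
    exact exp_le_exp.2 (by linarith)
  · refine Finset.prod_le_prod (fun i _ => (exp_pos _).le) fun i _ => exp_le_exp.2 ?_
    have h5 : 1 / 2 * a i * (exp (t i) + ε₁ ^ 2 * exp (-(t i))) ≤
        1 / 2 * a i * (exp (t i) + ε₂ ^ 2 * exp (-(t i))) := by
      have := ha i
      gcongr
    linarith

lemma wgt_zero (a : V → ℝ) (χ : (V → ℝ) → ℝ) (x : V) (t s : V → ℝ) :
    wgt a χ x 0 t s = Real.sqrt (2 * Real.pi / zfun a t) *
      (∏ i, Real.exp (-(1 / 2) * a i * Real.exp (t i))) * (a x * χ t) := by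
  simp [wgt]

lemma wgt_continuous (a : V → ℝ) (χ : (V → ℝ) → ℝ) (x : V) (t s : V → ℝ) :
    Continuous fun ε => wgt a χ x ε t s := by
  unfold wgt
  fun_prop

/-! ### Measurability -/

@[fun_prop]
lemma measurable_extV (o : Option V) : Measurable fun t : V → ℝ => extV t o := by
  cases o <;> simp only [extV, Option.elim] <;> fun_prop

@[fun_prop]
lemma measurable_treeW (β : V → V → ℝ) (ε : V → ℝ) (e : Sym2 (Option V)) :
    Measurable fun t => treeW β ε t e := by
  induction e using Sym2.ind with
  | _ i j =>
    simp only [treeW, esym, Sym2.lift_mk]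
    fun_prop

lemma measurable_gibbs (β : V → V → ℝ) (ε : V → ℝ) (e : Sym2 (Option V)) :
    Measurable fun p : (V → ℝ) × (V → ℝ) => gibbs β ε p.1 p.2 e := by
  induction e using Sym2.ind with
  | _ i j =>
    simp only [gibbs, Bfun, esym, Sym2.lift_mk]
    fun_prop

lemma measurable_gibbsG (G : SimpleGraph V) (β : V → V → ℝ) :
    Measurable fun p : (V → ℝ) × (V → ℝ) => gibbsG G β p.1 p.2 := by
  unfold gibbsG
  refine Finset.measurable_prod _ fun e _ => ?_
  simp_rw [← gibbs_some β 0]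
  exact measurable_gibbs β 0 _

lemma measurable_dens (G : SimpleGraph V) (β : V → V → ℝ) (ε : V → ℝ)
    (T : Finset (Sym2 (Option V))) :
    Measurable fun p : (V → ℝ) × (V → ℝ) => dens G β ε p.1 p.2 T := by
  unfold dens
  have := fun e => measurable_gibbs (V := V) β ε e
  refine Measurable.mul (Measurable.mul ?_ (Finset.measurable_prod _ fun e _ => this e)) ?_
  · fun_prop
  · fun_prop

lemma measurable_obs (pv : V → ℝ) (x y : V) (T : Finset (Sym2 (Option V))) :
    Measurable fun t => obs pv x y t T := by
  unfold obs
  fun_prop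

lemma measurable_kdensT (G : SimpleGraph V) (β : V → V → ℝ) (pv : V → ℝ) (x y : V)
    (T : Finset (Sym2 (Option V))) :
    Measurable fun p : (V → ℝ) × (V → ℝ) => kdensT G β pv x y T p.1 p.2 := by
  unfold kdensT
  have := measurable_gibbsG G β
  split_ifs <;> fun_prop

lemma measurable_wgt (a : V → ℝ) (χ : (V → ℝ) → ℝ) (hχ : Measurable χ) (x : V) (ε : ℝ) :
    Measurable fun p : (V → ℝ) × (V → ℝ) => wgt a χ x ε p.1 p.2 := by
  unfold wgt varS zfun
  fun_prop


/-! ### The change of variables `t = t' − log ε`, `s = c + ε s'` -/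

lemma exp_sub_log {ε : ℝ} (hε : 0 < ε) (u : ℝ) : exp (u - log ε) = ε⁻¹ * exp u := by
  rw [Real.exp_sub, Real.exp_log hε]; ring

lemma exp_neg_sub_log {ε : ℝ} (hε : 0 < ε) (u : ℝ) : exp (-(u - log ε)) = ε * exp (-u) := by
  rw [Real.exp_neg, exp_sub_log hε, Real.exp_neg, mul_inv, inv_inv]

lemma exp_add_sub_log {ε : ℝ} (hε : 0 < ε) (u v : ℝ) :
    exp (u - log ε + (v - log ε)) = ε⁻¹ ^ 2 * exp (u + v) := by
  rw [Real.exp_add, exp_sub_log hε, exp_sub_log hε, Real.exp_add]; ring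

lemma gibbsG_scale (G : SimpleGraph V) (β : V → V → ℝ) {ε : ℝ} (hε : 0 < ε) (t s : V → ℝ)
    (c : ℝ) :
    gibbsG G β (fun i => t i - log ε) (fun i => c + ε * s i) = gibbsG G β t s := by
  have h : ∀ i j, BfunV (fun i => t i - log ε) (fun i => c + ε * s i) i j = BfunV t s i j := by
    intro i j
    simp only [BfunV, exp_add_sub_log hε]
    rw [show t i - log ε - (t j - log ε) = t i - t j by ring]
    field_simp
    ring
  simp only [gibbsG, h]

lemma pin_scale {ε : ℝ} (hε : 0 < ε) (b u v : ℝ) :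
    exp (-(ε * b * (cosh (u - log ε) + 1 / 2 * v ^ 2 * exp (u - log ε) - 1))) =
      exp (ε * b) * exp (-(1 / 2) * b * (exp u + ε ^ 2 * exp (-u))) *
        exp (-(1 / 2) * (b * exp u * v ^ 2)) := by
  rw [Real.cosh_eq, exp_neg_sub_log hε, exp_sub_log hε, ← Real.exp_add, ← Real.exp_add]
  congr 1
  field_simp
  ring

lemma card_eq (x : V) : Fintype.card V = Fintype.card {i : V // i ≠ x} + 1 := by
  have : 0 < Fintype.card V := Fintype.card_pos_iff.2 ⟨x⟩
  rw [Fintype.card_subtype_compl, Fintype.card_subtype_eq]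
  omega

lemma forest_scale (G : SimpleGraph V) (β : V → V → ℝ) (hβ : ∀ i j, β i j = β j i)
    {T : Finset (Sym2 (Option V))} (hT : T ∈ STrees (aug G)) {x : V} (hx : roots T = {x})
    {ε : ℝ} (hε : 0 < ε) (η t : V → ℝ) :
    ∏ e ∈ forestOf T, treeW β η (fun i => t i - log ε) e =
      (ε⁻¹ ^ 2) ^ Fintype.card {i : V // i ≠ x} * ∏ e ∈ forestOf T, treeW β 0 t e := by
  rw [← card_forest G hT hx, ← Finset.prod_const, ← Finset.prod_mul_distrib]
  refine Finset.prod_congr rfl fun e he => ?_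
  obtain ⟨i, j, -, rfl⟩ := forest_edge G hT he
  rw [treeW_some β hβ, treeW_some β hβ, exp_add_sub_log hε]
  ring

lemma integrand_scale (G : SimpleGraph V) (β : V → V → ℝ) (hβ : ∀ i j, β i j = β j i)
    (pv : V → ℝ) (x y : V) (a : V → ℝ) (χ : (V → ℝ) → ℝ)
    {T : Finset (Sym2 (Option V))} (hT : T ∈ STrees (aug G)) (hx : roots T = {x})
    (hc : connIn T x y) {ε : ℝ} (hε : 0 < ε) (t s : V → ℝ) (c : ℝ) :
    dens G β (fun i => ε * a i) (fun i => t i - log ε) (fun i => c + ε * s i) T *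
        (χ t * obs pv x y (fun i => t i - log ε) T) =
      (ε ^ Fintype.card {i : V // i ≠ x})⁻¹ * exp (ε * ∑ i, a i) *
        (kdensT G β pv x y T t s *
          (∏ i, exp (-(1 / 2) * a i * (exp (t i) + ε ^ 2 * exp (-(t i))))) * (a x * χ t)) *
        exp (-(1 / 2) * ∑ i, a i * exp (t i) * (c + ε * s i) ^ 2) := by
  have hr : rootEdge x ∈ T := by
    have : x ∈ roots T := by rw [hx]; simp
    simpa [roots] using this
  have f1 : ∏ j, exp (-(t j - log ε)) / (2 * π) =
      ε ^ (Fintype.card {i : V // i ≠ x} + 1) * ∏ j, exp (-t j) / (2 * π) := by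
    rw [← card_eq x, ← Finset.card_univ, ← Finset.prod_const, ← Finset.prod_mul_distrib]
    exact Finset.prod_congr rfl fun j _ => by rw [exp_neg_sub_log hε]; ring
  have f3 : ∏ i, exp (-(ε * a i * (cosh (t i - log ε) +
      1 / 2 * (c + ε * s i) ^ 2 * exp (t i - log ε) - 1))) =
      exp (ε * ∑ i, a i) * (∏ i, exp (-(1 / 2) * a i * (exp (t i) + ε ^ 2 * exp (-(t i))))) *
        exp (-(1 / 2) * ∑ i, a i * exp (t i) * (c + ε * s i) ^ 2) := by
    rw [Finset.mul_sum, Finset.mul_sum, Real.exp_sum, Real.exp_sum, ← Finset.prod_mul_distrib,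
      ← Finset.prod_mul_distrib]
    exact Finset.prod_congr rfl fun i _ => pin_scale hε _ _ _
  have f6 : obs pv x y (fun i => t i - log ε) T =
      ε⁻¹ * (exp (t x + t y) / (pv x * exp (t x) + pv y * exp (t y))) := by
    unfold obs
    rw [if_pos ⟨hr, hc⟩, exp_add_sub_log hε, exp_sub_log hε, exp_sub_log hε, mul_one,
      show pv x * (ε⁻¹ * exp (t x)) + pv y * (ε⁻¹ * exp (t y)) =
        ε⁻¹ * (pv x * exp (t x) + pv y * exp (t y)) by ring,
      show ε⁻¹ ^ 2 * exp (t x + t y) = ε⁻¹ * (ε⁻¹ * exp (t x + t y)) by ring,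
      mul_div_mul_left _ _ (inv_ne_zero hε.ne'), mul_div_assoc]
  rw [dens_eq G β _ _ _ hT hx]
  rw [f1, gibbsG_scale G β hε, f3, f6, forest_scale G β hβ hT hx hε, exp_sub_log hε]
  unfold kdensT
  rw [if_pos ⟨hx, hc⟩]
  set n := Fintype.card {i : V // i ≠ x}
  have e1 : ε ^ (n + 1) * (ε⁻¹ ^ 2) ^ n * ε⁻¹ = (ε ^ n)⁻¹ := by
    rw [inv_pow, ← inv_pow, ← pow_mul, inv_pow, pow_mul', pow_succ]
    field_simp
  have e2 : ε * a x * (ε⁻¹ * exp (t x)) = a x * exp (t x) := by field_simp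
  rw [← e1, e2]
  ring

lemma wgt_eq_integral (a : V → ℝ) (ha : ∀ i, 0 ≤ a i) (x : V) (hax : 0 < a x)
    (χ : (V → ℝ) → ℝ) (ε : ℝ) (t s : V → ℝ) :
    Integrable (fun c : ℝ => exp (-(1 / 2) * ∑ i, a i * exp (t i) * (c + ε * s i) ^ 2)) ∧
    wgt a χ x ε t s =
      (∏ i, exp (-(1 / 2) * a i * (exp (t i) + ε ^ 2 * exp (-(t i))))) * (a x * χ t) *
        ∫ c : ℝ, exp (-(1 / 2) * ∑ i, a i * exp (t i) * (c + ε * s i) ^ 2) := by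
  have hz := (zfun_pos a ha x hax t).2
  obtain ⟨h1, h2⟩ := gauss_shift (fun i => a i * exp (t i)) (fun i => ε * s i) hz
  refine ⟨h1, ?_⟩
  rw [h2]
  have h3 : (∑ i, a i * exp (t i) / zfun a t * (ε * s i) ^ 2) -
      (∑ i, a i * exp (t i) / zfun a t * (ε * s i)) ^ 2 = ε ^ 2 * varS a t s := by
    unfold varS
    rw [mul_sub, ← mul_pow, Finset.mul_sum, Finset.mul_sum]
    congr 1
    · exact Finset.sum_congr rfl fun i _ => by ring
    · congr 1; exact Finset.sum_congr rfl fun i _ => by ring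
  unfold zfun at h3
  rw [h3]
  unfold wgt zfun
  ring_nf

/-- The Gaussian integral over the global shift `c` of the rescaled integrand. -/
lemma lintegral_shift_tree (G : SimpleGraph V) (β : V → V → ℝ) (hβ : ∀ i j, β i j = β j i)
    (hβpos : ∀ i j, G.Adj i j → 0 < β i j)
    (pv : V → ℝ) (x y : V) (hpx : 0 < pv x) (hpy : 0 < pv y)
    (a : V → ℝ) (ha : ∀ i, 0 ≤ a i) (hax : 0 < a x)
    (χ : (V → ℝ) → ℝ) (hχ : ∀ t, χ t ∈ Set.Ioc (0 : ℝ) 1)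
    {T : Finset (Sym2 (Option V))} (hT : T ∈ STrees (aug G)) (hx : roots T = {x})
    (hc : connIn T x y) {ε : ℝ} (hε : 0 < ε) (t s : V → ℝ) :
    ENNReal.ofReal (ε ^ Fintype.card {i : V // i ≠ x}) * ∫⁻ c : ℝ, ENNReal.ofReal
        (dens G β (fun i => ε * a i) (fun i => t i - log ε) (fun i => c + ε * s i) T *
          (χ (fun i => t i - log ε + log ε) * obs pv x y (fun i => t i - log ε) T)) =
      ENNReal.ofReal (exp (ε * ∑ i, a i)) *
        ENNReal.ofReal (kdensT G β pv x y T t s * wgt a χ x ε t s) := by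
  simp only [sub_add_cancel]
  obtain ⟨hi, hw⟩ := wgt_eq_integral a ha x hax χ ε t s
  set n := Fintype.card {i : V // i ≠ x} with hn
  set P := ∏ i, exp (-(1 / 2) * a i * (exp (t i) + ε ^ 2 * exp (-(t i)))) with hP
  have hP0 : 0 < P := Finset.prod_pos fun i _ => exp_pos _
  have hk0 := (kdensT_pos G β hβ hβpos pv x y hpx hpy hT t s).1
  have hχ0 := (hχ t).1
  have hK0 : 0 ≤ (ε ^ n)⁻¹ * exp (ε * ∑ i, a i) *
      (kdensT G β pv x y T t s * P * (a x * χ t)) := by positivity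
  simp only [integrand_scale G β hβ pv x y a χ hT hx hc hε]
  rw [← ofReal_integral_eq_lintegral_ofReal (hi.const_mul _)
      (ae_of_all _ fun c => mul_nonneg hK0 (exp_pos _).le),
    integral_const_mul, ← ENNReal.ofReal_mul (by positivity),
    ← ENNReal.ofReal_mul (exp_pos _).le, hw]
  congr 1
  field_simp

/-- Change of variables `(t, s) = (t' − log ε, c + ε s')` for an integrand whose integral over
the shift `c` is known. -/
lemma lintegral_change (x : V) {ε : ℝ} (hε : 0 < ε) (F H : (V → ℝ) → (V → ℝ) → ENNReal)
    (hF : Measurable fun p : (V → ℝ) × (V → ℝ) => F p.1 p.2)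
    (hH : Measurable fun p : (V → ℝ) × (V → ℝ) => H p.1 p.2)
    (C : ENNReal) (hC : C ≠ ⊤)
    (key : ∀ t s, ENNReal.ofReal (ε ^ Fintype.card {i : V // i ≠ x}) *
      ∫⁻ c : ℝ, F (fun i => t i - log ε) (fun i => c + ε * s i) = C * H t s) :
    ∫⁻ p : (V → ℝ) × (V → ℝ), F p.1 p.2 =
      C * ∫⁻ p : (V → ℝ) × ({i : V // i ≠ x} → ℝ), H p.1 (sext x p.2) := by
  have hse := measurable_sext x
  have hmap : Measurable fun p : (V → ℝ) × ({i : V // i ≠ x} → ℝ) => (p.1, sext x p.2) := by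
    fun_prop
  have hH' : Measurable fun p : (V → ℝ) × ({i : V // i ≠ x} → ℝ) => H p.1 (sext x p.2) :=
    hH.comp hmap
  have hsub : ∫⁻ t : V → ℝ, ∫⁻ s, F (fun i => t i - log ε) s = ∫⁻ t, ∫⁻ s, F t s :=
    lintegral_sub_right_eq_self (fun t => ∫⁻ s, F t s) (fun _ => log ε)
  rw [Measure.volume_eq_prod, lintegral_prod _ hF.aemeasurable, Measure.volume_eq_prod,
    lintegral_prod _ hH'.aemeasurable, ← hsub, ← lintegral_const_mul' _ _ hC]
  refine lintegral_congr fun t => ?_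
  have hFt : Measurable fun s : V → ℝ => F (fun i => t i - log ε) s :=
    hF.comp (measurable_const.prodMk measurable_id)
  rw [lintegral_shift_scale x hε _ hFt, ← lintegral_const_mul' _ _ ENNReal.ofReal_ne_top,
    ← lintegral_const_mul' _ _ hC]
  exact lintegral_congr fun w => key t (sext x w)

/-- Change of variables for a single tree, for Lebesgue integrals in `[0, ∞]`. -/
lemma lintegral_tree (G : SimpleGraph V) (β : V → V → ℝ) (hβ : ∀ i j, β i j = β j i)
    (hβpos : ∀ i j, G.Adj i j → 0 < β i j)
    (pv : V → ℝ) (x y : V) (hpx : 0 < pv x) (hpy : 0 < pv y)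
    (a : V → ℝ) (ha : ∀ i, 0 ≤ a i) (hax : 0 < a x)
    (χ : (V → ℝ) → ℝ) (hχm : Measurable χ) (hχ : ∀ t, χ t ∈ Set.Ioc (0 : ℝ) 1)
    {T : Finset (Sym2 (Option V))} (hT : T ∈ STrees (aug G)) (hx : roots T = {x})
    (hc : connIn T x y) {ε : ℝ} (hε : 0 < ε) :
    ∫⁻ p : (V → ℝ) × (V → ℝ), ENNReal.ofReal (dens G β (fun i => ε * a i) p.1 p.2 T *
        (χ (fun i => p.1 i + log ε) * obs pv x y p.1 T)) =
      ENNReal.ofReal (exp (ε * ∑ i, a i)) *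
      ∫⁻ p : (V → ℝ) × ({i : V // i ≠ x} → ℝ),
        ENNReal.ofReal (kdensT G β pv x y T p.1 (sext x p.2) * wgt a χ x ε p.1 (sext x p.2)) := by
  have h1 := measurable_dens G β (fun i => ε * a i) T
  have h2 := measurable_obs pv x y T
  exact lintegral_change x hε
    (fun t s => ENNReal.ofReal
      (dens G β (fun i => ε * a i) t s T * (χ (fun i => t i + log ε) * obs pv x y t T)))
    (fun t s => ENNReal.ofReal (kdensT G β pv x y T t s * wgt a χ x ε t s))
    (by fun_prop)
    ((measurable_kdensT G β pv x y T).mul (measurable_wgt a χ hχm x ε)).ennreal_ofReal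
    _ ENNReal.ofReal_ne_top
    (lintegral_shift_tree G β hβ hβpos pv x y hpx hpy a ha hax χ hχ hT hx hc hε)

/-- Change of variables for a single tree. -/
lemma integral_tree (G : SimpleGraph V) (β : V → V → ℝ) (hβ : ∀ i j, β i j = β j i)
    (hβpos : ∀ i j, G.Adj i j → 0 < β i j)
    (pv : V → ℝ) (x y : V) (hpx : 0 < pv x) (hpy : 0 < pv y)
    (a : V → ℝ) (ha : ∀ i, 0 ≤ a i) (hax : 0 < a x)
    (χ : (V → ℝ) → ℝ) (hχm : Measurable χ) (hχ : ∀ t, χ t ∈ Set.Ioc (0 : ℝ) 1)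
    {T : Finset (Sym2 (Option V))} (hT : T ∈ STrees (aug G)) {ε : ℝ} (hε : 0 < ε) :
    exp (-(ε * ∑ i, a i)) * ∫ p : (V → ℝ) × (V → ℝ), dens G β (fun i => ε * a i) p.1 p.2 T *
        (χ (fun i => p.1 i + log ε) * obs pv x y p.1 T * (if roots T = {x} then 1 else 0)) =
      ∫ p : (V → ℝ) × ({i : V // i ≠ x} → ℝ),
        kdensT G β pv x y T p.1 (sext x p.2) * wgt a χ x ε p.1 (sext x p.2) := by
  by_cases h : roots T = {x} ∧ connIn T x y
  · simp only [h.1, if_true, mul_one]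
    have hse := measurable_sext x
    have hmap : Measurable fun p : (V → ℝ) × ({i : V // i ≠ x} → ℝ) => (p.1, sext x p.2) := by
      fun_prop
    rw [integral_eq_lintegral_of_nonneg_ae, integral_eq_lintegral_of_nonneg_ae,
      lintegral_tree G β hβ hβpos pv x y hpx hpy a ha hax χ hχm hχ hT h.1 h.2 hε,
      ENNReal.toReal_mul, ENNReal.toReal_ofReal (exp_pos _).le, ← mul_assoc, ← Real.exp_add]
    · simp
    · exact ae_of_all _ fun p => mul_nonneg
        (kdensT_pos G β hβ hβpos pv x y hpx hpy hT _ _).1 (wgt_pos a ha x hax χ hχ ε _ _).le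
    · exact (((measurable_kdensT G β pv x y T).comp hmap).mul
        ((measurable_wgt a χ hχm x ε).comp hmap)).aestronglyMeasurable
    · refine ae_of_all _ fun p => ?_
      have h1 := (hχ (fun i => p.1 i + log ε)).1
      have h2 : 0 ≤ obs pv x y p.1 T := by
        unfold obs
        split_ifs <;> positivity
      have h3 : 0 ≤ dens G β (fun i => ε * a i) p.1 p.2 T := by
        rw [dens_eq G β _ _ _ hT h.1]
        have e1 : 0 ≤ ∏ e ∈ forestOf T, treeW β (fun i => ε * a i) p.1 e :=
          Finset.prod_nonneg fun e he => by
            obtain ⟨i, j, hij, rfl⟩ := forest_edge G hT he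
            rw [treeW_some β hβ]
            have := hβpos i j hij
            positivity
        have e2 : 0 ≤ gibbsG G β p.1 p.2 := Finset.prod_nonneg fun e _ => by
          induction e using Sym2.ind with
          | _ i j => simp only [esym, Sym2.lift_mk]; positivity
        positivity
      exact mul_nonneg h3 (mul_nonneg h1.le h2)
    · have h1 := measurable_dens G β (fun i => ε * a i) T
      have h2 := measurable_obs pv x y T
      exact Measurable.aestronglyMeasurable (by fun_prop)
  · have h1 : ∀ t, obs pv x y t T * (if roots T = {x} then 1 else 0) = 0 := by
      intro t
      by_cases h' : roots T = {x}
      · unfold obs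
        rw [if_neg (fun h2 => h ⟨h', h2.2⟩)]
        simp
      · simp [h']
    simp only [mul_assoc, h1]
    simp [kdensT, h]


/-! ### Integrability of the limiting integrand -/

/-- Total deviation `∑ |t_i − t_x|` of `t` from its value at `x`. -/
noncomputable def dev (x : V) (t : V → ℝ) : ℝ := ∑ i, |t i - t x|

/-- Total squared deviation `∑ (t_i − t_x)²` of `t` from its value at `x`. -/
noncomputable def sqdev (x : V) (t : V → ℝ) : ℝ := ∑ i, (t i - t x) ^ 2

lemma abs_sub_le_dev (x : V) (t : V → ℝ) (i : V) : |t i - t x| ≤ dev x t :=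
  Finset.single_le_sum (f := fun i => |t i - t x|) (fun _ _ => abs_nonneg _) (Finset.mem_univ i)

lemma measurable_dev (x : V) : Measurable (dev (V := V) x) := by
  unfold dev; fun_prop

lemma measurable_sqdev (x : V) : Measurable (sqdev (V := V) x) := by
  unfold sqdev; fun_prop

lemma sqdev_sext (x : V) (w : {i : V // i ≠ x} → ℝ) : sqdev x (sext x w) = ∑ i, w i ^ 2 := by
  rw [← sum_sext_sq x w]
  have : sext x w x = 0 := by simp [sext]
  simp [sqdev, this]

lemma sqdev_shift (x : V) (c : ℝ) (s : V → ℝ) : sqdev x (fun i => c + s i) = sqdev x s := by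
  simp [sqdev]

/-- The weights are bounded below on edges since `V` is finite. -/
lemma exists_lower (G : SimpleGraph V) (β : V → V → ℝ) (hβpos : ∀ i j, G.Adj i j → 0 < β i j)
    (x : V) : ∃ b : ℝ, 0 < b ∧ ∀ i j, G.Adj i j → b ≤ β i j := by
  have : Nonempty (V × V) := ⟨(x, x)⟩
  obtain ⟨p, hp⟩ := Finite.exists_min fun q : V × V => if G.Adj q.1 q.2 then β q.1 q.2 else 1
  refine ⟨if G.Adj p.1 p.2 then β p.1 p.2 else 1, ?_, fun i j h => ?_⟩
  · split_ifs with h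
    · exact hβpos _ _ h
    · exact one_pos
  · have := hp (i, j)
    simpa [h] using this

/-- Gaussian domination of the Gibbs factor: `cosh u − 1 ≥ u²/2` edgewise, then the Poincaré
inequality on the connected graph for both `t` and `s`. -/
lemma gibbsG_le (G : SimpleGraph V) (hG : G.Connected) (β : V → V → ℝ)
    (hβpos : ∀ i j, G.Adj i j → 0 < β i j) (x : V) :
    ∃ l : ℝ, 0 < l ∧ ∀ t s : V → ℝ,
      gibbsG G β t s ≤ exp (-l * sqdev x t) *
        exp (-(l * exp (2 * t x - 2 * dev x t)) * sqdev x s) := by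
  obtain ⟨b, hb, hbl⟩ := exists_lower G β hβpos x
  obtain ⟨κ, hκ, hP⟩ := poincare G hG x
  refine ⟨b / 2 * κ, by positivity, fun t s => ?_⟩
  set E := exp (2 * t x - 2 * dev x t) with hE
  have hE0 : 0 < E := exp_pos _
  have hEle : ∀ i j, E ≤ exp (t i + t j) := fun i j => by
    have h1 := (abs_le.1 (abs_sub_le_dev x t i)).1
    have h2 := (abs_le.1 (abs_sub_le_dev x t j)).1
    exact exp_le_exp.2 (by linarith)
  have hedge : ∀ i j, G.Adj i j → exp (-(β i j * (BfunV t s i j - 1))) ≤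
      exp (-(b / 2) * ((t i - t j) ^ 2 + E * (s i - s j) ^ 2)) := fun i j hij => by
    refine exp_le_exp.2 ?_
    have h1 := one_add_half_sq_le_cosh (t i - t j)
    have h2 : E * (s i - s j) ^ 2 ≤ exp (t i + t j) * (s i - s j) ^ 2 :=
      mul_le_mul_of_nonneg_right (hEle i j) (sq_nonneg _)
    have h3 : 1 / 2 * ((t i - t j) ^ 2 + E * (s i - s j) ^ 2) ≤ BfunV t s i j - 1 := by
      unfold BfunV; linarith
    have h4 : b * (1 / 2 * ((t i - t j) ^ 2 + E * (s i - s j) ^ 2)) ≤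
        β i j * (BfunV t s i j - 1) :=
      mul_le_mul (hbl i j hij) h3 (by positivity) (hβpos i j hij).le
    linarith
  have h1 : gibbsG G β t s ≤ exp (-(b / 2) * (dirichlet G t + E * dirichlet G s)) := by
    have e : -(b / 2) * (dirichlet G t + E * dirichlet G s) =
        ∑ e ∈ Finset.univ.filter (fun e : Sym2 V => e ∈ G.edgeSet),
          -(b / 2) * (esym (fun i j => (t i - t j) ^ 2) e +
            E * esym (fun i j => (s i - s j) ^ 2) e) := by
      simp only [dirichlet, Finset.mul_sum, mul_add, Finset.sum_add_distrib]
    rw [e, Real.exp_sum]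
    unfold gibbsG
    refine Finset.prod_le_prod (fun e _ => ?_) fun e he => ?_
    · induction e using Sym2.ind with
      | _ i j => simp only [esym, Sym2.lift_mk]; positivity
    · induction e using Sym2.ind with
      | _ i j =>
        have hij : G.Adj i j := by simpa using he
        have h1 := hedge i j hij
        have h2 := hedge j i hij.symm
        rw [show (t j - t i) ^ 2 = (t i - t j) ^ 2 by ring,
          show (s j - s i) ^ 2 = (s i - s j) ^ 2 by ring] at h2
        simp only [esym, Sym2.lift_mk]
        rw [show (t j - t i) ^ 2 = (t i - t j) ^ 2 by ring,
          show (s j - s i) ^ 2 = (s i - s j) ^ 2 by ring, add_self_div_two, add_self_div_two]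
        linarith
  refine h1.trans ?_
  rw [← Real.exp_add]
  refine exp_le_exp.2 ?_
  have p1 : κ * sqdev x t ≤ dirichlet G t := hP t
  have p2 : E * (κ * sqdev x s) ≤ E * dirichlet G s := mul_le_mul_of_nonneg_left (hP s) hE0.le
  have p3 : b / 2 * (κ * sqdev x t + E * (κ * sqdev x s)) ≤
      b / 2 * (dirichlet G t + E * dirichlet G s) :=
    mul_le_mul_of_nonneg_left (by linarith) (by positivity)
  linarith

/-- Product of the edge weights of the forest: at most exponential in `t_x` and the deviation. -/
lemma forest_le (G : SimpleGraph V) (β : V → V → ℝ) (hβ : ∀ i j, β i j = β j i)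
    (hβpos : ∀ i j, G.Adj i j → 0 < β i j) {T : Finset (Sym2 (Option V))}
    (hT : T ∈ STrees (aug G)) {x : V} (hx : roots T = {x}) :
    ∃ K : ℝ, 0 ≤ K ∧ ∀ t : V → ℝ, ∏ e ∈ forestOf T, treeW β 0 t e ≤
      K * exp (Fintype.card {i : V // i ≠ x} * (2 * t x + 2 * dev x t)) := by
  set M := ∑ i, ∑ j, |β i j|
  have hM : ∀ i j, β i j ≤ M := fun i j => (le_abs_self _).trans <|
    (Finset.single_le_sum (f := fun j => |β i j|) (fun j _ => abs_nonneg _)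
      (Finset.mem_univ j)).trans
    (Finset.single_le_sum (f := fun i => ∑ j, |β i j|)
      (fun i _ => Finset.sum_nonneg fun j _ => abs_nonneg _) (Finset.mem_univ i))
  have hM0 : 0 ≤ M := Finset.sum_nonneg fun i _ => Finset.sum_nonneg fun j _ => abs_nonneg _
  refine ⟨M ^ Fintype.card {i : V // i ≠ x}, by positivity, fun t => ?_⟩
  rw [Real.exp_nat_mul, ← mul_pow, ← card_forest G hT hx, ← Finset.prod_const]
  refine Finset.prod_le_prod ?_ ?_
  · intro e he
    obtain ⟨i, j, hij, rfl⟩ := forest_edge G hT he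
    rw [treeW_some β hβ]
    exact mul_nonneg (hβpos i j hij).le (exp_pos _).le
  · intro e he
    obtain ⟨i, j, hij, rfl⟩ := forest_edge G hT he
    rw [treeW_some β hβ]
    have h1 := (abs_le.1 (abs_sub_le_dev x t i)).2
    have h2 := (abs_le.1 (abs_sub_le_dev x t j)).2
    exact mul_le_mul (hM i j) (exp_le_exp.2 (by linarith)) (exp_pos _).le hM0

lemma prod_exp_neg_le (x : V) (t : V → ℝ) :
    ∏ j, exp (-t j) / (2 * π) ≤ (2 * π)⁻¹ ^ Fintype.card V *
      exp (-((Fintype.card {i : V // i ≠ x} + 1) * t x) + dev x t) := by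
  simp only [div_eq_mul_inv, Finset.prod_mul_distrib, ← Real.exp_sum, Finset.prod_const,
    Finset.card_univ]
  rw [mul_comm]
  refine mul_le_mul_of_nonneg_left (exp_le_exp.2 ?_) (by positivity)
  have h1 : ((Fintype.card {i : V // i ≠ x} + 1 : ℝ)) * t x = ∑ _i : V, t x := by
    rw [Finset.sum_const, Finset.card_univ, card_eq x, nsmul_eq_mul]; push_cast; ring
  rw [h1, ← Finset.sum_neg_distrib, dev, ← Finset.sum_add_distrib]
  exact Finset.sum_le_sum fun i _ => by linarith [neg_abs_le (t i - t x)]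

lemma wgt_zero_le (a : V → ℝ) (ha : ∀ i, 0 ≤ a i) (x : V) (hax : 0 < a x)
    (χ : (V → ℝ) → ℝ) (hχ : ∀ t, χ t ∈ Set.Ioc (0 : ℝ) 1) (t s : V → ℝ) :
    wgt a χ x 0 t s ≤ sqrt (2 * π / a x) * a x * exp (-(t x / 2) - 1 / 2 * a x * exp (t x)) := by
  rw [wgt_zero]
  obtain ⟨h1, h2⟩ := zfun_pos a ha x hax t
  have e1 : sqrt (2 * π / zfun a t) ≤ sqrt (2 * π / a x) * exp (-(t x / 2)) := by
    rw [← Real.sqrt_sq (exp_pos (-(t x / 2))).le, ← Real.sqrt_mul (by positivity)]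
    refine Real.sqrt_le_sqrt ?_
    rw [← Real.exp_nat_mul, show ((2 : ℕ) : ℝ) * -(t x / 2) = -t x by push_cast; ring,
      Real.exp_neg, div_mul_eq_mul_div, ← div_eq_mul_inv, div_div, mul_comm (exp (t x))]
    exact div_le_div_of_nonneg_left (by positivity) (by positivity) h1
  have e2 : ∏ i, exp (-(1 / 2) * a i * exp (t i)) ≤ exp (-(1 / 2 * a x * exp (t x))) := by
    rw [← Real.exp_sum]
    refine exp_le_exp.2 ?_
    have : ∑ i, -(1 / 2) * a i * exp (t i) = -(1 / 2) * zfun a t := by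
      rw [zfun, Finset.mul_sum]; exact Finset.sum_congr rfl fun i _ => by ring
    rw [this]; linarith
  have e3 : a x * χ t ≤ a x := mul_le_of_le_one_right hax.le (hχ t).2
  have h5 := (hχ t).1
  rw [sub_eq_add_neg, Real.exp_add]
  calc _ ≤ sqrt (2 * π / a x) * exp (-(t x / 2)) * exp (-(1 / 2 * a x * exp (t x))) * a x := by
        refine mul_le_mul (mul_le_mul e1 e2 (Finset.prod_nonneg fun i _ => (exp_pos _).le)
          (by positivity)) e3 (by positivity) (by positivity)
    _ = _ := by ring

/-- The dominating function for the integrand of a single tree. -/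
noncomputable def domF (x : V) (α l : ℝ) (p : (V → ℝ) × ({i : V // i ≠ x} → ℝ)) : ℝ :=
  exp ((Fintype.card {i : V // i ≠ x} + 1 / 2) * p.1 x +
      (2 * Fintype.card {i : V // i ≠ x} + 1) * dev x p.1 - 1 / 2 * α * exp (p.1 x) -
      l * sqdev x p.1) *
    exp (-(l * exp (2 * p.1 x - 2 * dev x p.1)) * ∑ i, p.2 i ^ 2)

lemma kdensT_le (G : SimpleGraph V) (hG : G.Connected) (β : V → V → ℝ)
    (hβ : ∀ i j, β i j = β j i) (hβpos : ∀ i j, G.Adj i j → 0 < β i j)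
    (pv : V → ℝ) (x y : V) (hpx : 0 < pv x) (hpy : 0 < pv y)
    (a : V → ℝ) (ha : ∀ i, 0 ≤ a i) (hax : 0 < a x)
    (χ : (V → ℝ) → ℝ) (hχ : ∀ t, χ t ∈ Set.Ioc (0 : ℝ) 1)
    {T : Finset (Sym2 (Option V))} (hT : T ∈ STrees (aug G)) (hx : roots T = {x})
    (hc : connIn T x y) :
    ∃ K l : ℝ, 0 < l ∧ ∀ p : (V → ℝ) × ({i : V // i ≠ x} → ℝ),
      kdensT G β pv x y T p.1 (sext x p.2) * wgt a χ x 0 p.1 (sext x p.2) ≤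
        K * domF x (a x) l p := by
  obtain ⟨l, hl, hgib⟩ := gibbsG_le G hG β hβpos x
  obtain ⟨K, hK, hfor⟩ := forest_le G β hβ hβpos hT hx
  refine ⟨(2 * π)⁻¹ ^ Fintype.card V * K * (pv y)⁻¹ * (sqrt (2 * π / a x) * a x), l, hl,
    fun ⟨t, w⟩ => ?_⟩
  have g1 := prod_exp_neg_le x t
  have g2 := hgib t (sext x w)
  rw [sqdev_sext] at g2
  have g3 := hfor t
  have g5 : exp (t x + t y) / (pv x * exp (t x) + pv y * exp (t y)) ≤ (pv y)⁻¹ * exp (t x) := by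
    rw [div_le_iff₀ (by positivity), Real.exp_add]
    have : (pv y)⁻¹ * exp (t x) * (pv x * exp (t x) + pv y * exp (t y)) =
        exp (t x) * exp (t y) + (pv y)⁻¹ * exp (t x) * (pv x * exp (t x)) := by field_simp; ring
    rw [this]
    have : 0 ≤ (pv y)⁻¹ * exp (t x) * (pv x * exp (t x)) := by positivity
    linarith
  have g6 := wgt_zero_le a ha x hax χ hχ t (sext x w)
  have n2 : 0 ≤ gibbsG G β t (sext x w) := Finset.prod_nonneg fun e _ => by
    induction e using Sym2.ind with
    | _ i j => simp only [esym, Sym2.lift_mk]; positivity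
  have n3 : 0 ≤ ∏ e ∈ forestOf T, treeW β 0 t e := Finset.prod_nonneg fun e he => by
    obtain ⟨i, j, hij, rfl⟩ := forest_edge G hT he
    rw [treeW_some β hβ]
    exact mul_nonneg (hβpos i j hij).le (exp_pos _).le
  have n6 := (wgt_pos a ha x hax χ hχ 0 t (sext x w)).le
  unfold kdensT
  rw [if_pos ⟨hx, hc⟩]
  set n := Fintype.card {i : V // i ≠ x}
  set W := exp (-(l * exp (2 * t x - 2 * dev x t)) * ∑ i, w i ^ 2) with hW
  calc _ ≤ ((2 * π)⁻¹ ^ Fintype.card V * exp (-((n + 1) * t x) + dev x t)) *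
        (exp (-l * sqdev x t) * W) *
        (K * exp (n * (2 * t x + 2 * dev x t))) * exp (t x) * ((pv y)⁻¹ * exp (t x)) *
        (sqrt (2 * π / a x) * a x * exp (-(t x / 2) - 1 / 2 * a x * exp (t x))) := by
        gcongr
    _ = _ := by
        have : exp ((n + 1 / 2) * t x + (2 * n + 1) * dev x t - 1 / 2 * a x * exp (t x) -
            l * sqdev x t) = exp (-((n + 1) * t x) + dev x t) * exp (-l * sqdev x t) *
            exp (n * (2 * t x + 2 * dev x t)) * exp (t x) * exp (t x) *
            exp (-(t x / 2) - 1 / 2 * a x * exp (t x)) := by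
          simp only [← Real.exp_add]
          congr 1
          ring
        simp only [domF]
        rw [this]
        ring

/-- The dominating function remains integrable in `t` after the Gaussian integral over `s`:
the quadratic form beats the linear growth, and the pinning at `x` controls the zero mode. -/
lemma integrable_dom_t (x : V) {α l : ℝ} (hα : 0 < α) (hl : 0 < l) (m : ℝ) :
    Integrable fun t : V → ℝ =>
      exp (t x / 2 - 1 / 2 * α * exp (t x)) * exp (m * dev x t - l * sqdev x t) := by
  have hm1 := measurable_dev (V := V) x
  have hm2 := measurable_sqdev (V := V) x
  have h1 : Integrable fun t : V → ℝ =>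
      exp (t x / 2 - 1 / 2 * α * exp (t x)) * exp (-(l / 2) * sqdev x t) := by
    rw [← (mp_shift x).integrable_comp (Measurable.aestronglyMeasurable (by fun_prop))]
    have h2 := (integrable_exp_half_sub α hα).mul_prod
      (integrable_gauss_pi (ι := {i : V // i ≠ x}) (half_pos hl))
    refine h2.congr (ae_of_all _ fun p => ?_)
    have h0 : sext x p.2 x = 0 := by simp [sext]
    simp only [Function.comp, sqdev_shift, sqdev_sext, h0, add_zero]
  refine (h1.const_mul (exp (Fintype.card V * (m ^ 2 / (2 * l))))).mono'
    (Measurable.aestronglyMeasurable (by fun_prop)) (ae_of_all _ fun t => ?_)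
  rw [Real.norm_of_nonneg (by positivity), mul_left_comm, ← Real.exp_add _ (-(l / 2) * _)]
  refine mul_le_mul_of_nonneg_left (exp_le_exp.2 ?_) (exp_pos _).le
  have h3 : m * dev x t ≤ Fintype.card V * (m ^ 2 / (2 * l)) + l / 2 * sqdev x t := by
    have e : Fintype.card V * (m ^ 2 / (2 * l)) = ∑ _i : V, m ^ 2 / (2 * l) := by
      rw [Finset.sum_const, Finset.card_univ, nsmul_eq_mul]
    rw [e, dev, sqdev, Finset.mul_sum, Finset.mul_sum, ← Finset.sum_add_distrib]
    refine Finset.sum_le_sum fun i _ => ?_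
    rw [← sq_abs (t i - t x)]
    set u := |t i - t x|
    -- AM-GM: the difference of the two sides is a square
    have : m ^ 2 / (2 * l) + l / 2 * u ^ 2 - m * u = (m - l * u) ^ 2 / (2 * l) := by
      field_simp; ring
    have h4 : 0 ≤ (m - l * u) ^ 2 / (2 * l) := by positivity
    linarith
  linarith

lemma integrable_domF (x : V) {α l : ℝ} (hα : 0 < α) (hl : 0 < l) :
    Integrable (domF (V := V) x α l) := by
  have hm1 := measurable_dev (V := V) x
  have hm2 := measurable_sqdev (V := V) x
  have hm : Measurable (domF (V := V) x α l) := by unfold domF; fun_prop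
  rw [Measure.volume_eq_prod, integrable_prod_iff hm.aestronglyMeasurable]
  refine ⟨ae_of_all _ fun t => ?_, ?_⟩
  · simp only [domF]
    exact (integrable_gauss_pi (ι := {i : V // i ≠ x})
      (A := l * exp (2 * t x - 2 * dev x t)) (by positivity)).const_mul _
  · have h := (integrable_dom_t x hα hl (3 * Fintype.card {i : V // i ≠ x} + 1)).const_mul
      (sqrt (π / l) ^ Fintype.card {i : V // i ≠ x})
    refine h.congr (ae_of_all _ fun t => ?_)
    have e0 : ∀ w, ‖domF x α l (t, w)‖ = domF x α l (t, w) := fun w =>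
      Real.norm_of_nonneg (by unfold domF; positivity)
    simp only [e0]
    simp only [domF]
    rw [integral_const_mul, integral_gauss_pi]
    set n := Fintype.card {i : V // i ≠ x}
    have e1 : sqrt (π / (l * exp (2 * t x - 2 * dev x t))) =
        sqrt (π / l) * exp (-t x + dev x t) := by
      rw [← Real.sqrt_sq (exp_pos (-t x + dev x t)).le, ← Real.sqrt_mul (by positivity),
        ← Real.exp_nat_mul, ← div_div, div_eq_mul_inv (π / l), ← Real.exp_neg]
      congr 3
      push_cast; ring
    rw [e1, mul_pow, ← Real.exp_nat_mul, ← Real.exp_add, mul_left_comm (exp _),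
      ← Real.exp_add]
    congr 2
    ring

lemma integrable_tree (G : SimpleGraph V) (hG : G.Connected) (β : V → V → ℝ)
    (hβ : ∀ i j, β i j = β j i) (hβpos : ∀ i j, G.Adj i j → 0 < β i j)
    (pv : V → ℝ) (x y : V) (hpx : 0 < pv x) (hpy : 0 < pv y)
    (a : V → ℝ) (ha : ∀ i, 0 ≤ a i) (hax : 0 < a x)
    (χ : (V → ℝ) → ℝ) (hχm : Measurable χ) (hχ : ∀ t, χ t ∈ Set.Ioc (0 : ℝ) 1)
    {T : Finset (Sym2 (Option V))} (hT : T ∈ STrees (aug G)) {ε : ℝ} (hε : 0 ≤ ε) :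
    Integrable fun p : (V → ℝ) × ({i : V // i ≠ x} → ℝ) =>
      kdensT G β pv x y T p.1 (sext x p.2) * wgt a χ x ε p.1 (sext x p.2) := by
  have hse := measurable_sext x
  have hmap : Measurable fun p : (V → ℝ) × ({i : V // i ≠ x} → ℝ) => (p.1, sext x p.2) := by
    fun_prop
  by_cases h : roots T = {x} ∧ connIn T x y
  · obtain ⟨K, l, hl, hle⟩ := kdensT_le G hG β hβ hβpos pv x y hpx hpy a ha hax χ hχ hT h.1 h.2
    refine ((integrable_domF x hax hl).const_mul K).mono'
      (((measurable_kdensT G β pv x y T).comp hmap).mul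
        ((measurable_wgt a χ hχm x ε).comp hmap)).aestronglyMeasurable (ae_of_all _ fun p => ?_)
    have h1 := (kdensT_pos G β hβ hβpos pv x y hpx hpy hT p.1 (sext x p.2)).1
    have h2 := (wgt_pos a ha x hax χ hχ ε p.1 (sext x p.2)).le
    rw [Real.norm_of_nonneg (mul_nonneg h1 h2)]
    exact (mul_le_mul_of_nonneg_left (wgt_anti a ha x hax χ hχ le_rfl hε _ _) h1).trans (hle p)
  · simp [kdensT, h]

end Lemmas

/-- for `a ≥ 0` with `a_x > 0` and a measurable density
`χ : ℝ^V → (0,1]`, for every `ε > 0`,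
`e^{−εΣa_i} E_{μ^{εa}}[χ(t+log ε) O^π_{xy} 1{R(T)={x}}]
 = ∫ κ(dt'ds') √(2π/z_{a,t'}) e^{−(z_{a,t'}/2)ε²Var_{a,t',s'}(S')}
     Π_i e^{−½a_i(e^{t'_i}+ε²e^{−t'_i})} a_x χ(t')`,
and as `ε ↓ 0` this quantity increases monotonically to
`∫ κ(dt'ds') √(2π/z_{a,t'}) Π_i e^{−½a_i e^{t'_i}} a_x χ(t')`, which is strictly positive. -/
theorem stmt_10 {V : Type*} [Fintype V] [DecidableEq V]
    (G : SimpleGraph V) (hG : G.Connected)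
    (β : V → V → ℝ) (hβsymm : ∀ i j, β i j = β j i)
    (hβpos : ∀ i j, G.Adj i j → 0 < β i j)
    (x y : V) (hxy : x ≠ y)
    (pv : V → ℝ) (hpv : ∀ i, 0 ≤ pv i) (hpx : 0 < pv x) (hpy : 0 < pv y)
    (a : V → ℝ) (ha : ∀ i, 0 ≤ a i) (hax : 0 < a x)
    (χ : (V → ℝ) → ℝ) (hχmeas : Measurable χ) (hχ : ∀ t, χ t ∈ Set.Ioc (0 : ℝ) 1) :
    (∀ ε : ℝ, 0 < ε →
      Real.exp (-(ε * ∑ i, a i)) *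
        expect G β (fun i => ε * a i)
          (fun t _ T => χ (fun i => t i + Real.log ε) * obs pv x y t T *
            (if roots T = {x} then 1 else 0))
      = ∫ p : (V → ℝ) × ({i : V // i ≠ x} → ℝ),
          kdens G β pv x y p.1 (sext x p.2) *
            (Real.sqrt (2 * Real.pi / zfun a p.1) *
              Real.exp (-(zfun a p.1 / 2) * ε ^ 2 * varS a p.1 (sext x p.2)) *
              (∏ i, Real.exp (-(1 / 2) * a i *
                (Real.exp (p.1 i) + ε ^ 2 * Real.exp (-(p.1 i))))) *
              (a x * χ p.1))) ∧
    (∀ ε₁ ε₂ : ℝ, 0 < ε₁ → ε₁ ≤ ε₂ →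
      (∫ p : (V → ℝ) × ({i : V // i ≠ x} → ℝ),
          kdens G β pv x y p.1 (sext x p.2) *
            (Real.sqrt (2 * Real.pi / zfun a p.1) *
              Real.exp (-(zfun a p.1 / 2) * ε₂ ^ 2 * varS a p.1 (sext x p.2)) *
              (∏ i, Real.exp (-(1 / 2) * a i *
                (Real.exp (p.1 i) + ε₂ ^ 2 * Real.exp (-(p.1 i))))) *
              (a x * χ p.1)))
        ≤ ∫ p : (V → ℝ) × ({i : V // i ≠ x} → ℝ),
            kdens G β pv x y p.1 (sext x p.2) *
              (Real.sqrt (2 * Real.pi / zfun a p.1) *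
                Real.exp (-(zfun a p.1 / 2) * ε₁ ^ 2 * varS a p.1 (sext x p.2)) *
                (∏ i, Real.exp (-(1 / 2) * a i *
                  (Real.exp (p.1 i) + ε₁ ^ 2 * Real.exp (-(p.1 i))))) *
                (a x * χ p.1))) ∧
    Filter.Tendsto
      (fun ε : ℝ =>
        ∫ p : (V → ℝ) × ({i : V // i ≠ x} → ℝ),
          kdens G β pv x y p.1 (sext x p.2) *
            (Real.sqrt (2 * Real.pi / zfun a p.1) *
              Real.exp (-(zfun a p.1 / 2) * ε ^ 2 * varS a p.1 (sext x p.2)) *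
              (∏ i, Real.exp (-(1 / 2) * a i *
                (Real.exp (p.1 i) + ε ^ 2 * Real.exp (-(p.1 i))))) *
              (a x * χ p.1)))
      (𝓝[>] (0 : ℝ))
      (𝓝 (∫ p : (V → ℝ) × ({i : V // i ≠ x} → ℝ),
          kdens G β pv x y p.1 (sext x p.2) *
            (Real.sqrt (2 * Real.pi / zfun a p.1) *
              (∏ i, Real.exp (-(1 / 2) * a i * Real.exp (p.1 i))) *
              (a x * χ p.1)))) ∧
    0 < ∫ p : (V → ℝ) × ({i : V // i ≠ x} → ℝ),
          kdens G β pv x y p.1 (sext x p.2) *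
            (Real.sqrt (2 * Real.pi / zfun a p.1) *
              (∏ i, Real.exp (-(1 / 2) * a i * Real.exp (p.1 i))) *
              (a x * χ p.1)) := by
  have hwz := fun p : (V → ℝ) × ({i : V // i ≠ x} → ℝ) => wgt_zero a χ x p.1 (sext x p.2)
  simp only [← hwz]
  have hw : ∀ (ε : ℝ) (t s : V → ℝ), Real.sqrt (2 * Real.pi / zfun a t) *
      Real.exp (-(zfun a t / 2) * ε ^ 2 * varS a t s) *
      (∏ i, Real.exp (-(1 / 2) * a i * (Real.exp (t i) + ε ^ 2 * Real.exp (-(t i))))) *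
      (a x * χ t) = wgt a χ x ε t s := fun _ _ _ => rfl
  simp only [hw]
  have hTint := fun {T} (hT : T ∈ STrees (aug G)) {ε : ℝ} (hε : 0 ≤ ε) =>
    integrable_tree G hG β hβsymm hβpos pv x y hpx hpy a ha hax χ hχmeas hχ hT hε
  have hJ : ∀ (ε : ℝ) (p : (V → ℝ) × ({i : V // i ≠ x} → ℝ)),
      kdens G β pv x y p.1 (sext x p.2) * wgt a χ x ε p.1 (sext x p.2) =
        ∑ T ∈ STrees (aug G),
          kdensT G β pv x y T p.1 (sext x p.2) * wgt a χ x ε p.1 (sext x p.2) :=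
    fun ε p => by rw [kdens_eq_sum, Finset.sum_mul]
  have hJint : ∀ ε : ℝ, 0 ≤ ε → Integrable fun p : (V → ℝ) × ({i : V // i ≠ x} → ℝ) =>
      kdens G β pv x y p.1 (sext x p.2) * wgt a χ x ε p.1 (sext x p.2) := fun ε hε => by
    simp only [hJ]
    exact integrable_finsetSum _ fun T hT => hTint hT hε
  have hkpos : ∀ t s, 0 < kdens G β pv x y t s := fun t s => by
    rw [kdens_eq_sum]
    obtain ⟨T, hT, h1, h2⟩ := exists_tree G hG x y
    exact Finset.sum_pos'
      (fun T hT => (kdensT_pos G β hβsymm hβpos pv x y hpx hpy hT t s).1)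
      ⟨T, hT, (kdensT_pos G β hβsymm hβpos pv x y hpx hpy hT t s).2 ⟨h1, h2⟩⟩
  have hwpos := wgt_pos a ha x hax χ hχ
  have hmono : ∀ ε₁ ε₂ : ℝ, 0 ≤ ε₁ → ε₁ ≤ ε₂ → ∀ p : (V → ℝ) × ({i : V // i ≠ x} → ℝ),
      kdens G β pv x y p.1 (sext x p.2) * wgt a χ x ε₂ p.1 (sext x p.2) ≤
        kdens G β pv x y p.1 (sext x p.2) * wgt a χ x ε₁ p.1 (sext x p.2) :=
    fun ε₁ ε₂ h0 h p =>
      mul_le_mul_of_nonneg_left (wgt_anti a ha x hax χ hχ h0 h _ _) (hkpos _ _).le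
  refine ⟨fun ε hε => ?_, fun ε₁ ε₂ h0 h => ?_, ?_, ?_⟩
  · simp only [hJ]
    rw [integral_finsetSum _ fun T hT => hTint hT hε.le, expect, Finset.mul_sum]
    exact Finset.sum_congr rfl fun T hT =>
      integral_tree G β hβsymm hβpos pv x y hpx hpy a ha hax χ hχmeas hχ hT hε
  · exact integral_mono (hJint ε₂ (h0.le.trans h)) (hJint ε₁ h0.le) (hmono ε₁ ε₂ h0.le h)
  · refine tendsto_integral_filter_of_dominated_convergence _ ?_ ?_ (hJint 0 le_rfl) ?_
    · filter_upwards [self_mem_nhdsWithin] with ε hε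
      exact (hJint ε (le_of_lt hε)).aestronglyMeasurable
    · filter_upwards [self_mem_nhdsWithin] with ε hε
      refine ae_of_all _ fun p => ?_
      rw [Real.norm_of_nonneg (mul_pos (hkpos _ _) (hwpos _ _ _)).le]
      exact hmono 0 ε le_rfl (le_of_lt hε) p
    · refine ae_of_all _ fun p => Tendsto.const_mul _ ?_
      exact ((wgt_continuous a χ x p.1 (sext x p.2)).tendsto 0).mono_left nhdsWithin_le_nhds
  · have hpos := fun p : (V → ℝ) × ({i : V // i ≠ x} → ℝ) =>
      mul_pos (hkpos p.1 (sext x p.2)) (hwpos 0 p.1 (sext x p.2))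
    rw [integral_pos_iff_support_of_nonneg (fun p => (hpos p).le) (hJint 0 le_rfl),
      Function.support_eq_univ fun p => (hpos p).ne']
    exact Measure.measure_univ_pos.2 (NeZero.ne _)

end H22
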